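/- Let M > 1 be a positive integer, let λ₁ and λ₂ be primitive M-th roots of unity, and let α and β be positive integers with 1 < α < M, 1 < β < M, λ₁^α = λ₂, λ₂^β = λ₁ and αβ = M + 1. Let F ∈ 𝒪(ℂ²,0,0) be given by F(x₁,x₂) = (λ₁x₁ + x₂^β, λ₂x₂ + x₁^α). Then 0 is an isolated fixed point of both F and F^M, with μ_F(0) = 1, μ_{F^M}(0) = αβ = M + 1, P_M(F,0) = M, and 𝒪_M(F,0) = 1. -/

import Mathlib

open Metric Set Filter Topology Polynomial Asymptotics
open scoped Classical

noncomputable section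

namespace ZhangPaper

/-- `ℂⁿ`. -/
abbrev Cn (n : ℕ) := Fin n → ℂ

variable {n : ℕ}

/-- A germ in `𝒪(ℂⁿ,0,0)`: holomorphic near `0` and fixing the origin. -/
def IsGerm (f : Cn n → Cn n) : Prop := AnalyticAt ℂ f 0 ∧ f 0 = 0

/-- `q` is a regular value of `h` on `s`. -/
def IsRegularValueOn (h : Cn n → Cn n) (s : Set (Cn n)) (q : Cn n) : Prop :=
  ∀ x ∈ s, h x = q → Function.Bijective (fderiv ℂ h x)

/-- `m` is the zero order (multiplicity) of `h` at the isolated zero `p`: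
the number of solutions of `h x = q` near `p`, for any regular value `q`
with `‖q‖` sufficiently small. -/
def HasZeroOrder (h : Cn n → Cn n) (p : Cn n) (m : ℕ) : Prop :=
  ∃ r > 0, AnalyticOnNhd ℂ h (closedBall p r) ∧ h p = 0 ∧
    (∀ x ∈ closedBall p r, h x = 0 → x = p) ∧
    (∀ ε > 0, ∃ q : Cn n, ‖q‖ < ε ∧ IsRegularValueOn h (ball p r) q) ∧
    ∃ δ > 0, ∀ q : Cn n, ‖q‖ < δ → IsRegularValueOn h (ball p r) q →
      {x ∈ ball p r | h x = q}.ncard = m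

/-- The zero order `π_h(p)` of `h` at `p`. -/
def zeroOrder (h : Cn n → Cn n) (p : Cn n) : ℕ := sInf {m | HasZeroOrder h p m}

/-- The fixed point index `μ_g(p)` of `g` at `p`. -/
def fixedPointIndex (g : Cn n → Cn n) (p : Cn n) : ℕ :=
  zeroOrder (fun x => x - g x) p

/-- The local Dold index `P_M(f,0)`. -/
def doldIndex (f : Cn n → Cn n) (M : ℕ) : ℤ :=
  ∑ τ ∈ M.primeFactors.powerset,
    (-1 : ℤ) ^ τ.card * (fixedPointIndex (f^[M / (∏ p ∈ τ, p)]) 0 : ℤ)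

/-- `x` is a periodic point of exact period `M` for `g`. -/
def ExactPeriodicPt (g : Cn n → Cn n) (M : ℕ) (x : Cn n) : Prop :=
  g^[M] x = x ∧ ∀ j, 0 < j → j < M → g^[j] x ≠ x

/-- `g` has at least `m` distinct periodic orbits of period `M` inside `B`. -/
def AtLeastOrbits (g : Cn n → Cn n) (M m : ℕ) (B : Set (Cn n)) : Prop :=
  ∃ p : Fin m → Cn n,
    (∀ i, ExactPeriodicPt g M (p i) ∧ ∀ j < M, g^[j] (p i) ∈ B) ∧
    ∀ i j : Fin m, i ≠ j → ∀ l < M, g^[l] (p i) ≠ p j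

/-- `g` has exactly `m` distinct periodic orbits of period `M` inside `B`. -/
def ExactlyOrbits (g : Cn n → Cn n) (M m : ℕ) (B : Set (Cn n)) : Prop :=
  AtLeastOrbits g M m B ∧ ¬ AtLeastOrbits g M (m + 1) B

/-- The number `𝒪_M(f,0)` of periodic orbits of period `M` of `f` hidden at the
fixed point `0`: the largest `m` such that there is a ball `B` centered at `0` in which
`0` is the only fixed point of `f^M`, and a sequence of holomorphic maps fixing `0`
converging to `f` uniformly on `B`, each having `m` distinct periodic orbits of
period `M` in `B`. -/
def hiddenOrbits (f : Cn n → Cn n) (M : ℕ) : ℕ :=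
  sSup {m | ∃ r > 0,
    (∀ x ∈ closedBall (0 : Cn n) r, f^[M] x = x → x = 0) ∧
    ∃ fk : ℕ → Cn n → Cn n,
      (∀ k, AnalyticOnNhd ℂ (fk k) (ball (0 : Cn n) r) ∧ fk k 0 = 0) ∧
      TendstoUniformlyOn fk f atTop (ball (0 : Cn n) r) ∧
      ∀ k, AtLeastOrbits (fk k) M m (ball (0 : Cn n) r)}

/-- `0` is an isolated fixed point of `g`. -/
def IsolatedFixedPtAt0 (g : Cn n → Cn n) : Prop :=
  g 0 = 0 ∧ ∀ᶠ x in 𝓝[≠] (0 : Cn n), g x ≠ x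

/-- `0` is an isolated zero of `h`. -/
def IsolatedZeroAt0 (h : Cn n → Cn n) : Prop :=
  h 0 = 0 ∧ ∀ᶠ x in 𝓝[≠] (0 : Cn n), h x ≠ 0

/-- `p` is a simple fixed point of `g`: `Dg(p)` has no eigenvalue `1`. -/
def SimpleFixedPt (g : Cn n → Cn n) (p : Cn n) : Prop :=
  g p = p ∧ ¬ Module.End.HasEigenvalue ((fderiv ℂ g p).toLinearMap) 1

/-- The global fixed point index `L(g)` of `g` over `U`: the sum of the fixed point
indices at all fixed points of `g` in `U`. -/
def globalIndex (g : Cn n → Cn n) (U : Set (Cn n)) : ℤ :=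
  ∑ᶠ p ∈ {x ∈ U | g x = x}, (fixedPointIndex g p : ℤ)

/-- The global Dold index `P_M(f)` over `U`. -/
def globalDold (f : Cn n → Cn n) (M : ℕ) (U : Set (Cn n)) : ℤ :=
  ∑ τ ∈ M.primeFactors.powerset,
    (-1 : ℤ) ^ τ.card * globalIndex (f^[M / (∏ p ∈ τ, p)]) U

/-!
Write `F = l * G` with `G = id + v`, where `l = (λ₁, λ₂)` acts coordinatewise and `v` is the map
`(x₀ ^ α, x₁ ^ β)` followed by a linear isomorphism. The relations `λ₁ ^ α = λ₂`, `λ₂ ^ β = λ₁` say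
that `G` commutes with multiplication by `l`, so `F^[j] = l ^ j * G^[j]`. For `0 < j < M` the
derivative of `id - F^[j]` at `0` is invertible and the index is `1`. For `j = M` one gets
`F^[M] = G^[M] = id + M v + o(v)`, so the index is the multiplicity `α β` of `v` and the Dold sum
collapses to `α β - 1`. A nonzero solution `x` of `ε x + v x = 0` has period exactly `M` under
`l * (G + ε)`, whence one hidden orbit. Conversely `m` orbits of period `M` of a nearby map are,
together with `0`, `m M + 1` fixed points of its `M`-th iterate, so `m M + 1 ≤ α β = M + 1`.

The multiplicity of `(x₁ ^ d₁, …, xₙ ^ dₙ)` is computed, stably under perturbation, in the Banach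
algebra `A` of functions continuous on the closed unit polydisc and holomorphic in each variable.
Multiplication by `x i ^ d i` has a left inverse on `A`, and the joint kernel of these left inverses
has dimension `∏ d i` and is a complement of the ideal `(x₁ ^ d₁, …, xₙ ^ dₙ)`. It remains a
complement of the ideal `(g₁, …, gₙ)` when `g` is close to `(x₁ ^ d₁, …, xₙ ^ dₙ)`. The zeros of
such a `g` are the characters of the algebra `A ⧸ (g₁, …, gₙ)` of dimension `∏ d i`, which is
reduced if all the zeros are simple.
-/

theorem isReduced_of_forall_maximal_annihilated {R : Type*} [CommRing R]
    (h : ∀ m : Ideal R, m.IsMaximal → ∃ d ∉ m, ∀ x ∈ m, d * x = 0) : IsReduced R := by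
  refine ⟨fun y hy ↦ ?_⟩
  by_contra hy0
  obtain ⟨m, hm, hle⟩ := Ideal.exists_le_maximal (Ideal.span {y}).annihilator fun htop ↦
    hy0 <| by
      simpa using (Submodule.mem_annihilator_span_singleton y (1 : R)).1 (htop ▸ trivial)
  obtain ⟨d, hd, hdm⟩ := h m hm
  exact hd <| hle <| (Submodule.mem_annihilator_span_singleton y d).2 <|
    hdm y (nilpotent_iff_mem_prime.1 hy m hm.isPrime)

theorem finrank_eq_natCard_maximalSpectrum (k Q : Type*) [Field k] [IsAlgClosed k] [CommRing Q]
    [Algebra k Q] [FiniteDimensional k Q] [IsReduced Q] :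
    Module.finrank k Q = Nat.card (MaximalSpectrum Q) := by
  have : IsArtinianRing Q := isArtinian_of_tower k inferInstance
  have := Fintype.ofFinite (MaximalSpectrum Q)
  have residueField (m : MaximalSpectrum Q) : Module.finrank k (Q ⧸ m.asIdeal) = 1 := by
    have bij : Function.Bijective (algebraMap k (Q ⧸ m.asIdeal)) :=
      IsAlgClosed.algebraMap_bijective_of_isIntegral
    exact ((AlgEquiv.ofBijective (Algebra.ofId k _) bij).toLinearEquiv.finrank_eq).symm.trans
      (Module.finrank_self k)
  rw [((IsArtinianRing.equivPi Q).restrictScalars k).toLinearEquiv.finrank_eq,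
    Module.finrank_pi_fintype]
  simp only [residueField, Finset.sum_const, Finset.card_univ, smul_eq_mul, mul_one,
    Nat.card_eq_fintype_card]

section Complements
variable {𝕜 V : Type*} [NontriviallyNormedField 𝕜] [NormedAddCommGroup V] [NormedSpace 𝕜 V]

/-- The projection `1 - N S` onto the kernel of `S` along the range of a right inverse `N`. -/
def kerProj (S N : V →L[𝕜] V) (h : S * N = 1) : V →L[𝕜] S.ker :=
  (1 - N * S).codRestrict S.ker fun v ↦ by
    have : S * (1 - N * S) = 0 := by rw [mul_sub, ← mul_assoc, h]; simp
    exact DFunLike.congr_fun this v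

theorem coe_kerProj_apply {S N : V →L[𝕜] V} (h : S * N = 1) (v : V) :
    (kerProj S N h v : V) = v - N (S v) := rfl

/-- The projection onto the kernel of `S` along the range of `N'`, for `N'` close to the right
inverse `N` of `S`. -/
def perturbedKerProj (S N : V →L[𝕜] V) (h : S * N = 1) (N' : V →L[𝕜] V) : V →L[𝕜] S.ker :=
  (kerProj S N h).comp (Ring.inverse (1 + (N' - N) * S))

/-- The operator induced by `T` on the kernel of `S`, by projecting along the range of `N'`. -/
def kerCompression (S N : V →L[𝕜] V) (h : S * N = 1) (N' T : V →L[𝕜] V) : S.ker →L[𝕜] S.ker :=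
  ((perturbedKerProj S N h N').comp T).comp S.ker.subtypeL

section OneOperator
variable {S N N' T : V →L[𝕜] V} (h : S * N = 1)

theorem perturbedKerProj_self (v : V) : (perturbedKerProj S N h N v : V) = v - N (S v) := by
  simp [perturbedKerProj, coe_kerProj_apply]

theorem kerCompression_self_apply (hT : Commute S T) (w : S.ker) :
    (kerCompression S N h N T w : V) = T w := by
  have : S (T w) = 0 := by rw [show S (T w) = T (S w) from DFunLike.congr_fun hT.eq _]; simp
  simp [kerCompression, perturbedKerProj_self, this]

variable (hu : IsUnit (1 + (N' - N) * S))
include hu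

theorem perturbedKerProj_coe (w : S.ker) : perturbedKerProj S N h N' w = w := by
  have fix : (1 + (N' - N) * S) (w : V) = w := by simp
  have inv : Ring.inverse (1 + (N' - N) * S) (w : V) = w := by
    conv_lhs => rw [← fix]
    exact DFunLike.congr_fun (Ring.inverse_mul_cancel _ hu) _
  exact Subtype.ext <| by simp [perturbedKerProj, coe_kerProj_apply, inv]

theorem perturbedKerProj_apply_eq_zero (v : V) : perturbedKerProj S N h N' (N' v) = 0 := by
  have key : (1 + (N' - N) * S) * N = N' := by rw [add_mul, mul_assoc, h]; simp
  have inv : Ring.inverse (1 + (N' - N) * S) (N' v) = N v := by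
    conv_lhs => rw [← DFunLike.congr_fun key v]
    exact DFunLike.congr_fun (Ring.inverse_mul_cancel_left _ N hu) v
  have hNv : S (N v) = v := DFunLike.congr_fun h v
  exact Subtype.ext <| by simp [perturbedKerProj, coe_kerProj_apply, inv, hNv]

theorem exists_eq_perturbedKerProj_add (v : V) :
    ∃ w, v = perturbedKerProj S N h N' v + N' w := by
  set u := Ring.inverse (1 + (N' - N) * S) v with hu_def
  have hv : (1 + (N' - N) * S) u = v := DFunLike.congr_fun (Ring.mul_inverse_cancel _ hu) v
  refine ⟨S u, ?_⟩
  conv_lhs => rw [← hv]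
  simp only [perturbedKerProj, coe_kerProj_apply, ContinuousLinearMap.comp_apply, ← hu_def,
    add_apply, mul_apply_eq_comp, sub_apply, one_apply_eq_self]
  abel

theorem perturbedKerProj_apply_coe (hT : Commute T N') (v : V) :
    perturbedKerProj S N h N' (T (perturbedKerProj S N h N' v)) =
      perturbedKerProj S N h N' (T v) := by
  obtain ⟨w, hw⟩ := exists_eq_perturbedKerProj_add h hu v
  have hTN : T (N' w) = N' (T w) := DFunLike.congr_fun hT.eq w
  conv_rhs => rw [hw, map_add, map_add, hTN, perturbedKerProj_apply_eq_zero h hu, add_zero]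

theorem commute_kerCompression {T' : V →L[𝕜] V} (hT : Commute T N') (hT' : Commute T' N')
    (hTT' : Commute T T') :
    Commute (kerCompression S N h N' T) (kerCompression S N h N' T') := by
  ext w
  have : T (T' w) = T' (T w) := DFunLike.congr_fun hTT'.eq _
  simp [kerCompression, perturbedKerProj_apply_coe h hu, hT, hT', this]

end OneOperator

section Family
variable {S N' : Fin (n + 1) → V →L[𝕜] V} {N : V →L[𝕜] V} (h : S 0 * N = 1)

theorem mem_iInf_ker_kerCompression_iff (hS : ∀ i j, Commute (S i) (S j)) (w : (S 0).ker) :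
    w ∈ (⨅ i : Fin n, (kerCompression (S 0) N h N (S i.succ)).ker) ↔
      (w : V) ∈ ⨅ i, (S i).ker := by
  simp only [Submodule.mem_iInf, LinearMap.mem_ker, ContinuousLinearMap.coe_coe,
    Fin.forall_fin_succ, ← Subtype.coe_inj (a := kerCompression _ _ _ _ _ _),
    kerCompression_self_apply h (hS 0 _), ZeroMemClass.coe_zero]
  exact ⟨fun hw ↦ ⟨w.2, hw⟩, And.right⟩

variable (hu : IsUnit (1 + (N' 0 - N) * S 0))
include hu

theorem map_perturbedKerProj_iSup_range_le (hN' : ∀ i j, Commute (N' i) (N' j)) :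
    (⨆ i, (N' i).range).map (perturbedKerProj (S 0) N h (N' 0) : V →ₗ[𝕜] (S 0).ker) ≤
      ⨆ i : Fin n, (kerCompression (S 0) N h (N' 0) (N' i.succ)).range := by
  simp only [Submodule.map_iSup, iSup_le_iff]
  rintro i _ ⟨_, ⟨v, rfl⟩, rfl⟩
  induction i using Fin.cases with
  | zero => simp [perturbedKerProj_apply_eq_zero h hu]
  | succ i =>
    exact Submodule.mem_iSup_of_mem i
      ⟨perturbedKerProj (S 0) N h (N' 0) v, perturbedKerProj_apply_coe h hu (hN' _ _) v⟩

theorem map_subtype_iSup_range_kerCompression_le :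
    (⨆ i : Fin n, (kerCompression (S 0) N h (N' 0) (N' i.succ)).range).map
      (S 0).ker.subtype ≤ ⨆ i, (N' i).range := by
  simp only [Submodule.map_iSup, iSup_le_iff]
  rintro i _ ⟨_, ⟨w, rfl⟩, rfl⟩
  obtain ⟨u, hu'⟩ := exists_eq_perturbedKerProj_add h hu (N' i.succ w)
  change (kerCompression (S 0) N h (N' 0) (N' i.succ) w : V) ∈ _
  have eq_sub : (kerCompression (S 0) N h (N' 0) (N' i.succ) w : V) = N' i.succ w - N' 0 u :=
    eq_sub_of_add_eq hu'.symm
  rw [eq_sub]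
  exact sub_mem (Submodule.mem_iSup_of_mem _ ⟨_, rfl⟩) (Submodule.mem_iSup_of_mem _ ⟨_, rfl⟩)

theorem isCompl_of_isCompl_kerCompression (hS : ∀ i j, Commute (S i) (S j))
    (hN' : ∀ i j, Commute (N' i) (N' j))
    (hW : IsCompl (⨅ i : Fin n, (kerCompression (S 0) N h N (S i.succ)).ker)
      (⨆ i : Fin n, (kerCompression (S 0) N h (N' 0) (N' i.succ)).range)) :
    IsCompl (⨅ i, (S i).ker) (⨆ i, (N' i).range) := by
  set π := perturbedKerProj (S 0) N h (N' 0) with hπ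
  constructor
  · refine Submodule.disjoint_def.2 fun x hx hx' ↦ ?_
    have hx0 : x ∈ (S 0).ker := (Submodule.mem_iInf _).1 hx 0
    have hπx : π x = ⟨x, hx0⟩ := perturbedKerProj_coe h hu ⟨x, hx0⟩
    have := Submodule.disjoint_def.1 hW.disjoint ⟨x, hx0⟩
      ((mem_iInf_ker_kerCompression_iff h hS _).2 hx)
      (hπx ▸ map_perturbedKerProj_iSup_range_le h hu hN' ⟨x, hx', rfl⟩)
    exact congrArg Subtype.val this
  · refine codisjoint_iff_le_sup.2 fun v _ ↦ ?_
    obtain ⟨u, hv⟩ := exists_eq_perturbedKerProj_add h hu v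
    obtain ⟨k, hk, r, hr, hkr⟩ :=
      Submodule.mem_sup.1 (codisjoint_iff_le_sup.1 hW.codisjoint (Submodule.mem_top (x := π v)))
    rw [hv, ← hπ, ← hkr, Submodule.coe_add, add_assoc]
    exact Submodule.add_mem_sup ((mem_iInf_ker_kerCompression_iff h hS k).1 hk)
      (add_mem (map_subtype_iSup_range_kerCompression_le h hu ⟨r, hr, rfl⟩)
        (Submodule.mem_iSup_of_mem 0 ⟨u, rfl⟩))

end Family

variable [CompleteSpace V]

theorem eventually_isUnit_one_add_sub_mul (S N : V →L[𝕜] V) :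
    ∀ᶠ N' in 𝓝 N, IsUnit (1 + (N' - N) * S) :=
  ((by fun_prop : Continuous fun N' ↦ 1 + (N' - N) * S).tendsto' N 1 (by simp)).eventually
    (Units.nhds 1)

theorem continuousAt_perturbedKerProj {S N : V →L[𝕜] V} (h : S * N = 1) :
    ContinuousAt (perturbedKerProj S N h) N := by
  have : ContinuousAt (fun N' ↦ Ring.inverse (1 + (N' - N) * S)) N := by
    refine ContinuousAt.comp (g := Ring.inverse) ?_ (by fun_prop)
    simpa using NormedRing.inverse_continuousAt (1 : (V →L[𝕜] V)ˣ)
  exact continuousAt_const.clm_comp this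

end Complements

/-- Induction on the number of operators, replacing `V` by the kernel of `S 0`. -/
theorem eventually_isCompl_iInf_ker_iSup_range {𝕜 : Type*} [NontriviallyNormedField 𝕜] :
    ∀ {n : ℕ} {V : Type*} [NormedAddCommGroup V] [NormedSpace 𝕜 V] [CompleteSpace V]
      {S N : Fin n → V →L[𝕜] V}, (∀ i, S i * N i = 1) → (∀ i j, Commute (S i) (S j)) →
      (∀ i j, i ≠ j → Commute (S i) (N j)) →
      ∀ᶠ N' in 𝓝 N, (∀ i j, Commute (N' i) (N' j)) →
        IsCompl (⨅ i, (S i).ker) (⨆ i, (N' i).range)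
  | 0, V, _, _, _, S, N, _, _, _ => by
    simp [iInf_of_empty, iSup_of_empty, isCompl_top_bot]
  | n + 1, V, _, _, _, S, N, hSN, hS, hcomm => by
    have : CompleteSpace (S 0).ker := (S 0).isClosed_ker.completeSpace_coe
    let compress (N' : Fin (n + 1) → V →L[𝕜] V) (i : Fin n) : (S 0).ker →L[𝕜] (S 0).ker :=
      kerCompression (S 0) (N 0) (hSN 0) (N' 0) (N' i.succ)
    have compress_cont : ContinuousAt compress N := by
      refine continuousAt_pi.2 fun i ↦ ContinuousAt.clm_comp (ContinuousAt.clm_comp ?_ ?_) ?_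
      · exact (continuousAt_perturbedKerProj (hSN 0)).comp (x := N)
          (f := fun N' : Fin (n + 1) → V →L[𝕜] V ↦ N' 0) (continuous_apply 0).continuousAt
      · exact (continuous_apply i.succ).continuousAt
      · exact continuousAt_const
    have ih := eventually_isCompl_iInf_ker_iSup_range (N := compress N)
      (S := fun i ↦ kerCompression (S 0) (N 0) (hSN 0) (N 0) (S i.succ)) ?_ ?_ ?_
    · filter_upwards [compress_cont.eventually ih, (continuousAt_apply 0 N).eventually
        (eventually_isUnit_one_add_sub_mul (S 0) (N 0))] with N' hW hu hN'
      refine isCompl_of_isCompl_kerCompression (hSN 0) hu hS hN' (hW fun i j ↦ ?_)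
      exact commute_kerCompression (hSN 0) hu (hN' _ _) (hN' _ _) (hN' _ _)
    all_goals
      have apply_N (i : Fin n) (w : (S 0).ker) : (compress N i w : V) = N i.succ w :=
        kerCompression_self_apply (hSN 0) (hcomm _ _ (Fin.succ_ne_zero i).symm) w
      have apply_S (i : Fin n) (w : (S 0).ker) :
          (kerCompression (S 0) (N 0) (hSN 0) (N 0) (S i.succ) w : V) = S i.succ w :=
        kerCompression_self_apply (hSN 0) (hS _ _) w
    · intro i
      ext w
      simpa [apply_N, apply_S] using DFunLike.congr_fun (hSN i.succ) (w : V)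
    · intro i j
      ext w
      simpa [apply_S] using DFunLike.congr_fun (hS i.succ j.succ).eq (w : V)
    · intro i j hij
      ext w
      simpa [apply_N, apply_S] using
        DFunLike.congr_fun (hcomm i.succ j.succ (by simpa using hij)).eq (w : V)

section Rank
universe u v
variable {k : Type u} {V W : Type v} [Field k] [AddCommGroup V] [Module k V]
  [AddCommGroup W] [Module k W]

theorem rank_map_add_rank_inf_ker (f : V →ₗ[k] W) (P : Submodule k V) :
    Module.rank k (P.map f) + Module.rank k (P ⊓ f.ker : Submodule k V) = Module.rank k P := by
  rw [← LinearMap.range_domRestrict, ← LinearMap.rank_range_add_rank_ker (f.domRestrict P),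
    LinearMap.ker_domRestrict]
  exact congrArg _ ((P.equivSubtypeMap _).trans
    (LinearEquiv.ofEq _ _ (Submodule.map_comap_subtype P f.ker))).rank_eq.symm

/-- The joint kernel of the powers `S i ^ d i`. -/
def jointKerPow (S : Fin n → Module.End k V) (d : Fin n → ℕ) : Submodule k V :=
  ⨅ i, (S i ^ d i).ker

variable {S N : Fin n → Module.End k V}

theorem mem_jointKerPow_update {d : Fin n → ℕ} {i : Fin n} {m : ℕ} {v : V} :
    v ∈ jointKerPow S (Function.update d i m) ↔
      (S i ^ m) v = 0 ∧ ∀ j ≠ i, (S j ^ d j) v = 0 := by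
  simp only [jointKerPow, Submodule.mem_iInf, LinearMap.mem_ker]
  refine ⟨fun h ↦ ⟨by simpa using h i, fun j hj ↦ by simpa [hj] using h j⟩, fun h j ↦ ?_⟩
  obtain rfl | hj := eq_or_ne j i
  · simpa using h.1
  · simpa [hj] using h.2 j hj

theorem jointKerPow_update_succ_inf_ker (d : Fin n → ℕ) (i : Fin n) (m : ℕ) :
    jointKerPow S (Function.update d i (m + 1)) ⊓ (S i).ker =
      jointKerPow S (Function.update d i 1) := by
  ext v
  simp only [Submodule.mem_inf, mem_jointKerPow_update, pow_succ, pow_zero, one_mul,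
    Module.End.mul_apply, LinearMap.mem_ker]
  constructor
  · exact fun ⟨⟨_, h⟩, hv⟩ ↦ ⟨hv, h⟩
  · exact fun ⟨hv, h⟩ ↦ ⟨⟨by rw [hv, map_zero], h⟩, hv⟩

variable (hSN : ∀ i, S i * N i = 1) (hS : ∀ i j, Commute (S i) (S j))
  (hSN' : ∀ i j, i ≠ j → Commute (S i) (N j))
include hSN hS hSN'

theorem map_jointKerPow_update_succ (d : Fin n → ℕ) (i : Fin n) (m : ℕ) :
    (jointKerPow S (Function.update d i (m + 1))).map (S i) =
      jointKerPow S (Function.update d i m) := by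
  apply le_antisymm
  · rintro _ ⟨v, hv, rfl⟩
    obtain ⟨hvi, hv⟩ := mem_jointKerPow_update.1 hv
    refine mem_jointKerPow_update.2 ⟨by simpa [pow_succ] using hvi, fun j hj ↦ ?_⟩
    rw [← Module.End.mul_apply, ((hS j i).pow_left (d j)).eq, Module.End.mul_apply, hv j hj,
      map_zero]
  · intro w hw
    obtain ⟨hwi, hw⟩ := mem_jointKerPow_update.1 hw
    have hSNw : S i (N i w) = w := LinearMap.congr_fun (hSN i) w
    refine ⟨N i w, mem_jointKerPow_update.2 ⟨by simpa [pow_succ, hSNw] using hwi, ?_⟩, hSNw⟩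
    intro j hj
    rw [← Module.End.mul_apply, ((hSN' j i hj).pow_left (d j)).eq, Module.End.mul_apply, hw j hj,
      map_zero]

theorem rank_jointKerPow_update (d : Fin n → ℕ) (i : Fin n) (m : ℕ) :
    Module.rank k (jointKerPow S (Function.update d i m)) =
      m * Module.rank k (jointKerPow S (Function.update d i 1)) := by
  induction m with
  | zero =>
    have : jointKerPow S (Function.update d i 0) = ⊥ :=
      (Submodule.eq_bot_iff _).2 fun v hv ↦ by simpa using (mem_jointKerPow_update.1 hv).1
    simp [this]
  | succ m ih =>
    rw [← rank_map_add_rank_inf_ker (S i), map_jointKerPow_update_succ hSN hS hSN', ih,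
      jointKerPow_update_succ_inf_ker, Nat.cast_succ, add_one_mul]

theorem rank_jointKerPow (d : Fin n → ℕ) :
    Module.rank k (jointKerPow S d) =
      (∏ i, d i : ℕ) * Module.rank k (⨅ i, (S i).ker : Submodule k V) := by
  suffices ∀ s : Finset (Fin n), Module.rank k (jointKerPow S (s.piecewise d 1)) =
      (∏ i ∈ s, d i : ℕ) * Module.rank k (jointKerPow S 1) by
    have joint_one : jointKerPow S 1 = ⨅ i, (S i).ker := by simp [jointKerPow]
    rw [← joint_one, ← this Finset.univ, Finset.piecewise_univ]
  intro s
  induction s using Finset.induction_on with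
  | empty => rw [Finset.piecewise_empty, Finset.prod_empty, Nat.cast_one, one_mul]
  | insert i s hi ih =>
    have : Function.update (s.piecewise d 1) i 1 = s.piecewise d 1 :=
      Function.update_eq_self_iff.2 (by simp [hi])
    rw [Finset.piecewise_insert, rank_jointKerPow_update hSN hS hSN', this, ih,
      Finset.prod_insert hi, Nat.cast_mul, mul_assoc]

end Rank

/-- The closed unit disc of `ℂ`. -/
abbrev ClosedDisc := closedBall (0 : ℂ) 1

instance : ConnectedSpace ClosedDisc :=
  isConnected_iff_connectedSpace.1 <| (convex_closedBall 0 1).isConnected ⟨0, by simp⟩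

instance : Nontrivial ClosedDisc :=
  ⟨⟨0, by simp⟩, ⟨1, by simp⟩, fun h ↦ zero_ne_one (congrArg Subtype.val h)⟩

/-- The extension by `0` to `ℂ` of a function on the closed disc. -/
def discExtend (φ : ClosedDisc → ℂ) : ℂ → ℂ := Function.extend Subtype.val φ 0

theorem discExtend_coe (φ : ClosedDisc → ℂ) (z : ClosedDisc) : discExtend φ z = φ z :=
  Subtype.val_injective.extend_apply φ 0 z

theorem eqOn_discExtend {φ : ClosedDisc → ℂ} {F : ℂ → ℂ} (h : ∀ z : ClosedDisc, φ z = F z) :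
    EqOn (discExtend φ) F (closedBall 0 1) := fun z hz ↦
  (discExtend_coe φ ⟨z, hz⟩).trans (h ⟨z, hz⟩)

theorem differentiableOn_discExtend_congr {φ : ClosedDisc → ℂ} {F : ℂ → ℂ}
    (h : ∀ z : ClosedDisc, φ z = F z) (hF : DifferentiableOn ℂ F (ball 0 1)) :
    DifferentiableOn ℂ (discExtend φ) (ball 0 1) :=
  hF.congr ((eqOn_discExtend h).mono ball_subset_closedBall)

theorem continuousOn_discExtend (φ : C(ClosedDisc, ℂ)) :
    ContinuousOn (discExtend φ) (closedBall 0 1) := by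
  rw [continuousOn_iff_continuous_domRestrict]
  exact φ.continuous.congr fun z ↦ (discExtend_coe φ z).symm

/-- The disc algebra: continuous functions on the closed unit disc that are holomorphic in its
interior. -/
def discAlgebra : Subalgebra ℂ C(ClosedDisc, ℂ) where
  carrier := {φ | DifferentiableOn ℂ (discExtend φ) (ball 0 1)}
  mul_mem' {φ ψ} hφ hψ := differentiableOn_discExtend_congr
    (fun z ↦ by simp [discExtend_coe]) (hφ.mul hψ)
  add_mem' {φ ψ} hφ hψ := differentiableOn_discExtend_congr
    (fun z ↦ by simp [discExtend_coe]) (hφ.add hψ)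
  algebraMap_mem' c := differentiableOn_discExtend_congr (fun _ ↦ rfl)
    (differentiableOn_const c)

theorem isClosed_discAlgebra : IsClosed (discAlgebra : Set C(ClosedDisc, ℂ)) := by
  refine IsSeqClosed.isClosed fun φ ψ hφ hψ ↦ ?_
  refine TendstoLocallyUniformlyOn.differentiableOn (F := fun k ↦ discExtend (φ k)) (φ := atTop)
    ?_ (.of_forall hφ) isOpen_ball
  refine TendstoUniformlyOn.tendstoLocallyUniformlyOn fun u hu ↦ ?_
  filter_upwards [ContinuousMap.tendsto_iff_tendstoUniformly.1 hψ u hu] with k hk z hz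
  have hz := ball_subset_closedBall hz
  simpa only [discExtend_coe] using
    (discExtend_coe ψ ⟨z, hz⟩).symm ▸ (discExtend_coe (φ k) ⟨z, hz⟩).symm ▸ hk ⟨z, hz⟩

/-- The open unit disc of `ℂ`. -/
abbrev OpenDisc := ball (0 : ℂ) 1

instance : Coe OpenDisc ClosedDisc := ⟨inclusion ball_subset_closedBall⟩

theorem dense_ne_closedDisc (p : ClosedDisc) : Dense {z : ClosedDisc | z ≠ p} :=
  have := ConnectedSpace.neBot_nhdsWithin_compl_of_nontrivial_of_t1space p
  dense_compl_singleton p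

section DiscQuotient
variable (p : OpenDisc) (φ : discAlgebra)

theorem continuousOn_dslope_discExtend :
    ContinuousOn (dslope (discExtend φ.1) p) (closedBall 0 1) :=
  (continuousOn_dslope (mem_of_superset (isOpen_ball.mem_nhds p.2) ball_subset_closedBall)).2
    ⟨continuousOn_discExtend φ.1, φ.2.differentiableAt (isOpen_ball.mem_nhds p.2)⟩

theorem differentiableOn_dslope_discExtend :
    DifferentiableOn ℂ (dslope (discExtend φ.1) p) (ball 0 1) :=
  (Complex.differentiableOn_dslope (isOpen_ball.mem_nhds p.2)).2 φ.2

/-- The quotient `(φ - φ p) / (z - p)`, with the value `φ' p` at `p`. -/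
def discDslope : C(ClosedDisc, ℂ) where
  toFun z := dslope (discExtend φ.1) p z
  continuous_toFun :=
    continuousOn_iff_continuous_domRestrict.1 (continuousOn_dslope_discExtend p φ)

theorem discDslope_mem : discDslope p φ ∈ discAlgebra :=
  differentiableOn_discExtend_congr (fun _ ↦ rfl) (differentiableOn_dslope_discExtend p φ)

theorem discDslope_self : discDslope p φ p = deriv (discExtend φ.1) p :=
  dslope_same _ _

theorem sub_mul_discDslope (z : ClosedDisc) :
    ((z : ℂ) - p) * discDslope p φ z = φ.1 z - φ.1 p := by
  have := sub_smul_dslope (discExtend φ.1) p z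
  rwa [discExtend_coe, show (p : ℂ) = ((p : ClosedDisc) : ℂ) from rfl, discExtend_coe] at this

theorem eq_discDslope {ψ : C(ClosedDisc, ℂ)}
    (h : ∀ z : ClosedDisc, ((z : ℂ) - p) * ψ z = φ.1 z - φ.1 p) : ψ = discDslope p φ := by
  refine DFunLike.coe_injective (ψ.continuous.ext_on (dense_ne_closedDisc p)
    (discDslope p φ).continuous fun z hz ↦ ?_)
  exact mul_left_cancel₀ (sub_ne_zero.2 fun h ↦ hz (Subtype.ext h))
    ((h z).trans (sub_mul_discDslope p φ z).symm)

/-- By the maximum principle the quotient is bounded by its values on the unit circle, where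
`1 - ‖p‖ ≤ ‖z - p‖`. -/
theorem norm_discDslope_le : ‖discDslope p φ‖ ≤ 2 / (1 - ‖(p : ℂ)‖) * ‖φ‖ := by
  have hp : 0 < 1 - ‖(p : ℂ)‖ := sub_pos.2 (mem_ball_zero_iff.1 p.2)
  refine (ContinuousMap.norm_le _ (by positivity)).2 fun z ↦ ?_
  refine Complex.norm_le_of_forall_mem_frontier_norm_le (isBounded_ball (x := (0 : ℂ)) (r := 1))
    ⟨differentiableOn_dslope_discExtend p φ, ?_⟩ (fun w hw ↦ ?_) ?_
  · rw [closure_ball _ one_ne_zero]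
    exact continuousOn_dslope_discExtend p φ
  · rw [frontier_ball _ one_ne_zero] at hw
    have hwp : 1 - ‖(p : ℂ)‖ ≤ ‖w - p‖ :=
      mem_sphere_zero_iff_norm.1 hw ▸ norm_sub_norm_le w p
    have quotient := sub_mul_discDslope p φ ⟨w, sphere_subset_closedBall hw⟩
    rw [div_mul_eq_mul_div, le_div_iff₀' hp]
    calc (1 - ‖(p : ℂ)‖) * ‖dslope (discExtend φ.1) p w‖
        ≤ ‖w - p‖ * ‖dslope (discExtend φ.1) p w‖ := by gcongr
      _ = ‖φ.1 ⟨w, sphere_subset_closedBall hw⟩ - φ.1 p‖ := by rw [← quotient, norm_mul]; rfl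
      _ ≤ ‖φ‖ + ‖φ‖ := (norm_sub_le _ _).trans
        (add_le_add (φ.1.norm_coe_le_norm _) (φ.1.norm_coe_le_norm _))
      _ = 2 * ‖φ‖ := (two_mul _).symm
  · rw [closure_ball _ one_ne_zero]
    exact z.2

/-- The operator `φ ↦ (φ - φ p) / (z - p)`, from the disc algebra to continuous functions. -/
def discQuotient : discAlgebra →L[ℂ] C(ClosedDisc, ℂ) :=
  LinearMap.mkContinuous
    { toFun := discDslope p
      map_add' φ ψ := (eq_discDslope p (φ + ψ) fun z ↦ by
        simpa [mul_add, sub_mul_discDslope] using by ring).symm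
      map_smul' c φ := (eq_discDslope p (c • φ) fun z ↦ by
        simp [mul_left_comm _ c, sub_mul_discDslope, mul_sub]).symm }
    (2 / (1 - ‖(p : ℂ)‖)) (norm_discDslope_le p)

end DiscQuotient

section Polydisc
/-- The closed unit polydisc of `ℂⁿ`. -/
abbrev Polydisc (n : ℕ) := Fin n → ClosedDisc

/-- Restriction of continuous functions to the disc through `x` parallel to the `i`-th axis. -/
def slice (x : Polydisc n) (i : Fin n) : C(Polydisc n, ℂ) →ₐ[ℂ] C(ClosedDisc, ℂ) :=
  ContinuousMap.compRightAlgHom ℂ ℂ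
    ⟨Function.update x i, continuous_const.update i continuous_id⟩

@[simp]
theorem slice_apply (x : Polydisc n) (i : Fin n) (f : C(Polydisc n, ℂ)) (z : ClosedDisc) :
    slice x i f z = f (Function.update x i z) := rfl

theorem norm_slice_le (x : Polydisc n) (i : Fin n) (f : C(Polydisc n, ℂ)) :
    ‖slice x i f‖ ≤ ‖f‖ :=
  (ContinuousMap.norm_le _ (norm_nonneg f)).2 fun _ ↦ f.norm_coe_le_norm _

theorem continuous_slice_left (i : Fin n) (f : C(Polydisc n, ℂ)) :
    Continuous fun x ↦ slice x i f :=
  ContinuousMap.continuous_of_continuous_uncurry _ <|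
    f.continuous.comp (continuous_fst.update i continuous_snd)

theorem continuous_slice (x : Polydisc n) (i : Fin n) : Continuous (slice x i) :=
  ContinuousMap.continuous_precomp _

theorem dense_apply_ne (i : Fin n) (p : ClosedDisc) : Dense {x : Polydisc n | x i ≠ p} :=
  (dense_ne_closedDisc p).preimage (isOpenMap_eval i)

variable (n) in
/-- The polydisc algebra: continuous functions on the closed unit polydisc that are holomorphic in
each variable separately. -/
def polydiscAlgebra : Subalgebra ℂ C(Polydisc n, ℂ) :=
  ⨅ (x) (i), discAlgebra.comap (slice x i)

theorem mem_polydiscAlgebra {f : C(Polydisc n, ℂ)} :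
    f ∈ polydiscAlgebra n ↔ ∀ x i, slice x i f ∈ discAlgebra := by
  simp [polydiscAlgebra, Algebra.mem_iInf]

theorem isClosed_polydiscAlgebra : IsClosed (polydiscAlgebra n : Set C(Polydisc n, ℂ)) := by
  have : (polydiscAlgebra n : Set C(Polydisc n, ℂ)) =
      ⋂ (x) (i), slice x i ⁻¹' (discAlgebra : Set C(ClosedDisc, ℂ)) := by
    ext f
    simp [mem_polydiscAlgebra]
  rw [this]
  exact isClosed_iInter fun x ↦ isClosed_iInter fun i ↦
    isClosed_discAlgebra.preimage (continuous_slice x i)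

instance : CompleteSpace (polydiscAlgebra n) := isClosed_polydiscAlgebra.completeSpace_coe

instance : NormOneClass (polydiscAlgebra n) := ⟨(norm_one : ‖(1 : C(Polydisc n, ℂ))‖ = 1)⟩

/-- The slice of an element of the polydisc algebra, as an element of the disc algebra. -/
def discSlice (x : Polydisc n) (i : Fin n) : polydiscAlgebra n →ₐ[ℂ] discAlgebra :=
  ((slice x i).comp (polydiscAlgebra n).val).codRestrict discAlgebra
    fun f ↦ mem_polydiscAlgebra.1 f.2 x i

theorem coe_discSlice_apply (x : Polydisc n) (i : Fin n) (f : polydiscAlgebra n)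
    (z : ClosedDisc) : (discSlice x i f).1 z = f.1 (Function.update x i z) := rfl

/-- Evaluation at a point of the polydisc. -/
def polydiscEval (x : Polydisc n) : polydiscAlgebra n →ₐ[ℂ] ℂ :=
  (ContinuousMap.evalAlgHom ℂ ℂ x).comp (polydiscAlgebra n).val

@[ext]
theorem polydiscAlgebra_ext {f g : polydiscAlgebra n}
    (h : ∀ x, polydiscEval x f = polydiscEval x g) : f = g :=
  Subtype.ext (ContinuousMap.ext h)

/-- The `i`-th coordinate function. -/
def coord (i : Fin n) : polydiscAlgebra n :=
  ⟨⟨fun x ↦ x i, by fun_prop⟩, mem_polydiscAlgebra.2 fun x j ↦ by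
    obtain rfl | h := eq_or_ne i j
    · exact differentiableOn_discExtend_congr (F := id) (fun z ↦ by simp) differentiableOn_id
    · exact differentiableOn_discExtend_congr (F := fun _ ↦ x i) (fun z ↦ by simp [h])
        (differentiableOn_const _)⟩

@[simp]
theorem polydiscEval_coord (x : Polydisc n) (i : Fin n) : polydiscEval x (coord i) = x i := rfl

/-- Substitution of the constant `p` for the `i`-th variable. -/
def substConst (i : Fin n) (p : ClosedDisc) : polydiscAlgebra n →ₐ[ℂ] polydiscAlgebra n :=
  ((ContinuousMap.compRightAlgHom ℂ ℂ ⟨fun x : Polydisc n ↦ Function.update x i p,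
    continuous_id.update i continuous_const⟩).comp (polydiscAlgebra n).val).codRestrict
    (polydiscAlgebra n) fun f ↦ mem_polydiscAlgebra.2 fun x j ↦ by
      obtain rfl | h := eq_or_ne i j
      · exact differentiableOn_discExtend_congr (F := fun _ ↦ f.1 (Function.update x i p))
          (fun z ↦ by simp) (differentiableOn_const _)
      · exact differentiableOn_discExtend_congr
          (fun z ↦ by
            simp [Function.update_comm h, discExtend_coe])
          (mem_polydiscAlgebra.1 f.2 (Function.update x i p) j)

@[simp]
theorem polydiscEval_substConst (x : Polydisc n) (i : Fin n) (p : ClosedDisc)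
    (f : polydiscAlgebra n) :
    polydiscEval x (substConst i p f) = polydiscEval (Function.update x i p) f := rfl

/-- The function `(f - f|_{x i = p}) / (x i - p)`. -/
def polydiscDslope (i : Fin n) (p : OpenDisc) (f : polydiscAlgebra n) : C(Polydisc n, ℂ) where
  toFun x := discQuotient p (discSlice x i f) (x i)
  continuous_toFun := by
    have : Continuous fun x ↦ discSlice x i f := (continuous_slice_left i f.1).subtype_mk _
    exact ((discQuotient p).continuous.comp this).eval (continuous_apply i)

theorem polydiscDslope_apply (i : Fin n) (p : OpenDisc) (f : polydiscAlgebra n)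
    (x : Polydisc n) : polydiscDslope i p f x = discDslope p (discSlice x i f) (x i) := rfl

theorem sub_mul_polydiscDslope_apply (i : Fin n) (p : OpenDisc) (f : polydiscAlgebra n)
    (x : Polydisc n) :
    ((x i : ℂ) - p) * polydiscDslope i p f x = f.1 x - f.1 (Function.update x i p) := by
  rw [polydiscDslope_apply, sub_mul_discDslope, coe_discSlice_apply, coe_discSlice_apply,
    Function.update_eq_self]

theorem slice_polydiscDslope_self (i : Fin n) (p : OpenDisc) (f : polydiscAlgebra n)
    (x : Polydisc n) : slice x i (polydiscDslope i p f) = discDslope p (discSlice x i f) :=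
  eq_discDslope p _ fun z ↦ by
    simpa [coe_discSlice_apply] using
      sub_mul_polydiscDslope_apply i p f (Function.update x i z)

theorem slice_polydiscDslope_of_ne {i j : Fin n} (hij : i ≠ j) (p : OpenDisc)
    (f : polydiscAlgebra n) {x : Polydisc n} (hx : x i ≠ p) :
    slice x j (polydiscDslope i p f) =
      ((x i : ℂ) - p)⁻¹ • (discSlice x j f - discSlice (Function.update x i p) j f).1 := by
  ext z
  have hx : (x i : ℂ) - p ≠ 0 := sub_ne_zero.2 fun h ↦ hx (Subtype.ext h)
  have quotient := sub_mul_polydiscDslope_apply i p f (Function.update x j z)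
  rw [Function.update_of_ne hij, ← Function.update_comm hij] at quotient
  exact (eq_inv_mul_iff_mul_eq₀ hx).2 quotient

theorem polydiscDslope_mem (i : Fin n) (p : OpenDisc) (f : polydiscAlgebra n) :
    polydiscDslope i p f ∈ polydiscAlgebra n := by
  refine mem_polydiscAlgebra.2 fun x j ↦ ?_
  obtain rfl | hij := eq_or_ne i j
  · exact slice_polydiscDslope_self i p f x ▸ discDslope_mem p _
  · refine (isClosed_discAlgebra.preimage
      (continuous_slice_left j (polydiscDslope i p f))).closure_subset_iff.2
      (fun y hy ↦ ?_) (dense_apply_ne i p x)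
    rw [mem_preimage, slice_polydiscDslope_of_ne hij p f hy]
    exact discAlgebra.smul_mem (Subtype.property _) _

theorem norm_polydiscDslope_le (i : Fin n) (p : OpenDisc) (f : polydiscAlgebra n) :
    ‖polydiscDslope i p f‖ ≤ ‖discQuotient p‖ * ‖f‖ :=
  (ContinuousMap.norm_le _ (by positivity)).2 fun x ↦
    ((discQuotient p (discSlice x i f)).norm_coe_le_norm _).trans <|
      (discQuotient p).le_opNorm_of_le (norm_slice_le x i f.1)

/-- The operator `f ↦ (f - f|_{x i = p}) / (x i - p)` on the polydisc algebra. -/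
def polydiscQuotient (i : Fin n) (p : OpenDisc) : polydiscAlgebra n →L[ℂ] polydiscAlgebra n :=
  LinearMap.mkContinuous
    { toFun f := ⟨polydiscDslope i p f, polydiscDslope_mem i p f⟩
      map_add' f g := polydiscAlgebra_ext fun x ↦ by
        change discQuotient p (discSlice x i (f + g)) (x i) = _
        simp only [map_add]
        rfl
      map_smul' c f := polydiscAlgebra_ext fun x ↦ by
        change discQuotient p (discSlice x i (c • f)) (x i) = _
        simp only [map_smul]
        rfl }
    ‖discQuotient p‖ (norm_polydiscDslope_le i p)

/-- The coordinate function `x i` translated so as to vanish at `p`. -/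
def coordSub (i : Fin n) (p : ClosedDisc) : polydiscAlgebra n :=
  coord i - algebraMap ℂ (polydiscAlgebra n) p

@[simp]
theorem polydiscEval_coordSub (x : Polydisc n) (i : Fin n) (p : ClosedDisc) :
    polydiscEval x (coordSub i p) = x i - p := by
  simp [coordSub]

theorem isLeftRegular_coordSub (i : Fin n) (p : ClosedDisc) :
    IsLeftRegular (coordSub i p) := fun f g hfg ↦ by
  refine Subtype.ext <| DFunLike.coe_injective <|
    f.1.continuous.ext_on (dense_apply_ne i p) g.1.continuous fun x hx ↦ ?_
  have := congrArg (polydiscEval x) hfg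
  simp only [map_mul, polydiscEval_coordSub] at this
  exact mul_left_cancel₀ (sub_ne_zero.2 fun h ↦ hx (Subtype.ext h)) this

theorem coordSub_mul_polydiscQuotient (i : Fin n) (p : OpenDisc) (f : polydiscAlgebra n) :
    coordSub i p * polydiscQuotient i p f = f - substConst i p f :=
  polydiscAlgebra_ext fun x ↦ by
    simpa using! sub_mul_polydiscDslope_apply i p f x

theorem polydiscQuotient_eq_iff {i : Fin n} {p : OpenDisc} {f g : polydiscAlgebra n} :
    polydiscQuotient i p f = g ↔ f - substConst i p f = coordSub i p * g := by
  rw [← coordSub_mul_polydiscQuotient]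
  exact (isLeftRegular_coordSub i p).eq_iff.symm

end Polydisc

section PolydiscOperators
theorem substConst_comm {i j : Fin n} (hij : i ≠ j) (p q : ClosedDisc) (f : polydiscAlgebra n) :
    substConst i p (substConst j q f) = substConst j q (substConst i p f) :=
  polydiscAlgebra_ext fun x ↦ by simp [Function.update_comm hij]

theorem substConst_coordSub_self (i : Fin n) (p : ClosedDisc) :
    substConst i p (coordSub i p) = 0 :=
  polydiscAlgebra_ext fun x ↦ by simp

theorem substConst_coordSub_of_ne {i j : Fin n} (hij : i ≠ j) (p q : ClosedDisc) :
    substConst i p (coordSub j q) = coordSub j q :=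
  polydiscAlgebra_ext fun x ↦ by simp [hij.symm]

theorem polydiscQuotient_coordSub_mul (i : Fin n) (p : OpenDisc) (f : polydiscAlgebra n) :
    polydiscQuotient i p (coordSub i p * f) = f :=
  polydiscQuotient_eq_iff.2 <| by simp [substConst_coordSub_self]

theorem polydiscQuotient_mul (i : Fin n) (p : OpenDisc) (f g : polydiscAlgebra n) :
    polydiscQuotient i p (f * g) =
      polydiscQuotient i p f * g + substConst i p f * polydiscQuotient i p g := by
  rw [polydiscQuotient_eq_iff, mul_add, ← mul_assoc, mul_left_comm,
    coordSub_mul_polydiscQuotient, coordSub_mul_polydiscQuotient, map_mul]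
  ring

theorem polydiscQuotient_coordSub_of_ne {i j : Fin n} (hij : i ≠ j) (p : OpenDisc)
    (q : ClosedDisc) : polydiscQuotient i p (coordSub j q) = 0 :=
  polydiscQuotient_eq_iff.2 <| by rw [substConst_coordSub_of_ne hij, sub_self, mul_zero]

theorem polydiscQuotient_coordSub_mul_of_ne {i j : Fin n} (hij : i ≠ j) (p : OpenDisc)
    (q : ClosedDisc) (f : polydiscAlgebra n) :
    polydiscQuotient i p (coordSub j q * f) = coordSub j q * polydiscQuotient i p f := by
  rw [polydiscQuotient_mul, polydiscQuotient_coordSub_of_ne hij, zero_mul, zero_add,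
    substConst_coordSub_of_ne hij]

theorem polydiscQuotient_substConst_of_ne {i j : Fin n} (hij : i ≠ j) (p : OpenDisc)
    (q : ClosedDisc) (f : polydiscAlgebra n) :
    polydiscQuotient i p (substConst j q f) = substConst j q (polydiscQuotient i p f) := by
  rw [polydiscQuotient_eq_iff, substConst_comm hij, ← map_sub, ← coordSub_mul_polydiscQuotient,
    map_mul, substConst_coordSub_of_ne hij.symm]

theorem polydiscQuotient_comm {i j : Fin n} (hij : i ≠ j) (p q : OpenDisc)
    (f : polydiscAlgebra n) :
    polydiscQuotient i p (polydiscQuotient j q f) =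
      polydiscQuotient j q (polydiscQuotient i p f) := by
  rw [polydiscQuotient_eq_iff, ← polydiscQuotient_coordSub_mul_of_ne hij.symm,
    coordSub_mul_polydiscQuotient, map_sub, polydiscQuotient_substConst_of_ne hij.symm]

theorem polydisc_induction {P : polydiscAlgebra n → Prop} (p : Polydisc n)
    {f : polydiscAlgebra n} (hf : P f) (step : ∀ i g, P g → P (substConst i (p i) g)) :
    P (algebraMap ℂ _ (polydiscEval p f)) := by
  suffices ∀ s : Finset (Fin n), ∃ g, P g ∧
      ∀ x, polydiscEval x g = polydiscEval (s.piecewise p x) f by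
    obtain ⟨g, hg, hgf⟩ := this Finset.univ
    convert hg
    ext x
    simp [hgf]
  intro s
  induction s using Finset.induction_on with
  | empty => exact ⟨f, hf, fun x ↦ by simp⟩
  | insert i s _ ih =>
    obtain ⟨g, hg, hgf⟩ := ih
    refine ⟨substConst i (p i) g, step i g hg, fun x ↦ ?_⟩
    rw [polydiscEval_substConst, hgf, Finset.piecewise_insert, Finset.update_piecewise,
      Function.update_eq_self]

theorem sub_polydiscEval_mem_span_coordSub (p : Fin n → OpenDisc) (f : polydiscAlgebra n) :
    f - algebraMap ℂ _ (polydiscEval (fun i ↦ p i) f) ∈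
      Ideal.span (range fun i ↦ coordSub i (p i)) := by
  refine polydisc_induction (fun i ↦ p i)
    (P := fun g ↦ f - g ∈ Ideal.span (range fun i ↦ coordSub i (p i))) (by simp) fun i g hg ↦ ?_
  rw [← sub_add_sub_cancel f g, ← coordSub_mul_polydiscQuotient]
  exact add_mem hg (Ideal.mul_mem_right _ _ (Ideal.subset_span (mem_range_self i)))

theorem iInf_ker_polydiscQuotient (p : Fin n → OpenDisc) :
    ⨅ i, (polydiscQuotient i (p i)).ker =
      Subalgebra.toSubmodule (⊥ : Subalgebra ℂ (polydiscAlgebra n)) := by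
  ext f
  simp only [Submodule.mem_iInf, LinearMap.mem_ker, ContinuousLinearMap.coe_coe,
    polydiscQuotient_eq_iff, mul_zero, sub_eq_zero, Subalgebra.mem_toSubmodule,
    Algebra.mem_bot]
  constructor
  · exact fun h ↦ ⟨_, (polydisc_induction (fun i ↦ p i) (P := (f = ·)) rfl
      fun i g hg ↦ hg ▸ h i).symm⟩
  · rintro ⟨c, rfl⟩ i
    exact (AlgHom.commutes _ _).symm

end PolydiscOperators

theorem exists_algHom_ker_eq (k : Type*) {Q : Type*} [Field k] [IsAlgClosed k] [CommRing Q]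
    [Algebra k Q] [FiniteDimensional k Q] (m : Ideal Q) [m.IsMaximal] :
    ∃ χ : Q →ₐ[k] k, RingHom.ker χ = m := by
  have bij : Function.Bijective (algebraMap k (Q ⧸ m)) :=
    IsAlgClosed.algebraMap_bijective_of_isIntegral
  let e := AlgEquiv.ofBijective (Algebra.ofId k _) bij
  refine ⟨(e.symm : (Q ⧸ m) →ₐ[k] k).comp (Ideal.Quotient.mkₐ k m), ?_⟩
  ext x
  simp [RingHom.mem_ker, Ideal.Quotient.eq_zero_iff_mem]

section Perturbation
variable {𝕜 A : Type*} [NontriviallyNormedField 𝕜] [NormedCommRing A] [NormedAlgebra 𝕜 A]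

theorem iSup_range_mul_eq_span (g : Fin n → A) :
    ⨆ i, (ContinuousLinearMap.mul 𝕜 A (g i)).range =
      (Ideal.span (range g)).restrictScalars 𝕜 := by
  apply le_antisymm
  · rw [iSup_le_iff]
    rintro i _ ⟨f, rfl⟩
    exact Ideal.mul_mem_right f _ (Ideal.subset_span (mem_range_self i))
  · intro f hf
    obtain ⟨c, rfl⟩ := Ideal.mem_span_range_iff_exists_fun.1 hf
    exact sum_mem fun i _ ↦ Submodule.mem_iSup_of_mem i ⟨c i, mul_comm _ _⟩

theorem mul_pow_eq_pow_mul (f : A) (m : ℕ) :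
    ContinuousLinearMap.mul 𝕜 A (f ^ m) = ContinuousLinearMap.mul 𝕜 A f ^ m := by
  induction m with
  | zero => ext; simp
  | succ m ih => ext; simp [pow_succ, ← ih, mul_assoc]

theorem eventually_rank_quotient_span [CompleteSpace A] {S : Fin n → A →L[𝕜] A} {a : Fin n → A}
    (hSa : ∀ i f, S i (a i * f) = f) (hS : ∀ i j f, S i (S j f) = S j (S i f))
    (hSa' : ∀ i j, i ≠ j → ∀ f, S i (a j * f) = a j * S i f) (d : Fin n → ℕ) :
    ∀ᶠ g in 𝓝 fun i ↦ a i ^ d i,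
      Module.rank 𝕜 (A ⧸ Ideal.span (range g)) =
        (∏ i, d i : ℕ) * Module.rank 𝕜 (⨅ i, (S i).ker : Submodule 𝕜 A) := by
  let N (i : Fin n) := ContinuousLinearMap.mul 𝕜 A (a i)
  have hSN (i) : S i * N i = 1 := ContinuousLinearMap.ext (hSa i)
  have hSS (i j) : Commute (S i) (S j) := ContinuousLinearMap.ext (hS i j)
  have hSN' (i j) (hij : i ≠ j) : Commute (S i) (N j) := ContinuousLinearMap.ext (hSa' i j hij)
  have stable := eventually_isCompl_iInf_ker_iSup_range
    (S := fun i ↦ S i ^ d i) (N := fun i ↦ ContinuousLinearMap.mul 𝕜 A (a i ^ d i))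
    (fun i ↦ by rw [mul_pow_eq_pow_mul]; exact pow_mul_pow_eq_one _ (hSN i))
    (fun i j ↦ (hSS i j).pow_pow _ _)
    (fun i j hij ↦ by rw [mul_pow_eq_pow_mul]; exact (hSN' i j hij).pow_pow _ _)
  have tendsto : Tendsto (fun (g : Fin n → A) i ↦ ContinuousLinearMap.mul 𝕜 A (g i))
      (𝓝 fun i ↦ a i ^ d i) (𝓝 fun i ↦ ContinuousLinearMap.mul 𝕜 A (a i ^ d i)) :=
    Continuous.tendsto (by fun_prop) _
  filter_upwards [tendsto.eventually stable] with g hg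
  have isCompl := hg fun i j ↦ ContinuousLinearMap.ext fun f ↦ mul_left_comm _ _ _
  rw [iSup_range_mul_eq_span] at isCompl
  refine ((Submodule.Quotient.restrictScalarsEquiv 𝕜 (Ideal.span (range g))).symm.trans
    (Submodule.quotientEquivOfIsCompl _ _ isCompl.symm)).rank_eq.trans ?_
  have jointKer_eq : ⨅ i, (S i ^ d i).ker = jointKerPow (fun i ↦ (S i : Module.End 𝕜 A)) d :=
    iInf_congr fun i ↦ congrArg _ (ContinuousLinearMap.toLinearMap_pow _ _)
  rw [jointKer_eq]
  exact rank_jointKerPow (S := fun i ↦ (S i : Module.End 𝕜 A)) (N := fun i ↦ (N i).toLinearMap)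
    (fun i ↦ congrArg ContinuousLinearMap.toLinearMap (hSN i))
    (fun i j ↦ congrArg ContinuousLinearMap.toLinearMap (hSS i j))
    (fun i j hij ↦ congrArg ContinuousLinearMap.toLinearMap (hSN' i j hij)) d

theorem eventually_rank_polydiscAlgebra_quotient_span (d : Fin n → ℕ) :
    ∀ᶠ g in 𝓝 fun i : Fin n ↦ coord i ^ d i,
      Module.rank ℂ (polydiscAlgebra n ⧸ Ideal.span (range g)) = (∏ i, d i : ℕ) := by
  let o : OpenDisc := ⟨0, mem_ball_self one_pos⟩
  let S (i : Fin n) : polydiscAlgebra n →L[ℂ] polydiscAlgebra n := polydiscQuotient i o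
  let a (i : Fin n) : polydiscAlgebra n := coordSub i o
  have rank_eq := eventually_rank_quotient_span (S := S) (a := a)
    (fun i f ↦ polydiscQuotient_coordSub_mul i o f)
    (fun i j f ↦ (eq_or_ne i j).elim (fun h ↦ by rw [h]) fun h ↦ polydiscQuotient_comm h o o f)
    (fun i j h f ↦ polydiscQuotient_coordSub_mul_of_ne h o o f) d
  have ker_eq : ⨅ i, (S i).ker = Subalgebra.toSubmodule ⊥ :=
    iInf_ker_polydiscQuotient fun _ ↦ o
  have a_eq : a = coord := funext fun i ↦ by simp [a, coordSub, o]
  rw [ker_eq, Subalgebra.rank_toSubmodule, Subalgebra.rank_bot, mul_one, a_eq] at rank_eq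
  exact rank_eq

end Perturbation

section CharacterCount
variable {k Q : Type*} [Field k] [CommRing Q] [Algebra k Q] {N : ℕ}

theorem card_algHom_le_of_rank_eq (h : Module.rank k Q = N) : ENat.card (Q →ₐ[k] k) ≤ N := by
  have : FiniteDimensional k Q := Module.finite_of_rank_eq_nat h
  rw [ENat.card_eq_coe_natCard, ← Module.finrank_eq_of_rank_eq h]
  exact Nat.cast_le.2 (card_algHom_le_finrank k Q k)

theorem card_algHom_eq_of_rank_eq [IsAlgClosed k] [IsReduced Q] (h : Module.rank k Q = N) :
    ENat.card (Q →ₐ[k] k) = N := by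
  have : FiniteDimensional k Q := Module.finite_of_rank_eq_nat h
  refine le_antisymm (card_algHom_le_of_rank_eq h) ?_
  choose χ hχ using fun m : MaximalSpectrum Q ↦
    have := m.isMaximal
    exists_algHom_ker_eq k m.asIdeal
  rw [ENat.card_eq_coe_natCard, ← Module.finrank_eq_of_rank_eq h,
    finrank_eq_natCard_maximalSpectrum]
  exact Nat.cast_le.2 <| Nat.card_le_card_of_injective χ fun m m' h ↦
    MaximalSpectrum.ext <| by rw [← hχ m, ← hχ m', h]

end CharacterCount

section CharactersOfQuotient
variable {k A : Type*} [Field k] [CommRing A] [Algebra k A] {I : Ideal A} {N : ℕ}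

variable (k I) in
theorem encard_algHom_vanishing_eq :
    {χ : A →ₐ[k] k | I ≤ RingHom.ker χ}.encard = ENat.card ((A ⧸ I) →ₐ[k] k) :=
  ENat.card_congr
    { toFun χ := Ideal.Quotient.liftₐ I χ.1 fun _ hf ↦ χ.2 hf
      invFun χ := ⟨χ.comp (Ideal.Quotient.mkₐ k I), fun f hf ↦ by
        simp [RingHom.mem_ker, Ideal.Quotient.eq_zero_iff_mem.2 hf]⟩
      left_inv _ := rfl
      right_inv _ := Ideal.Quotient.algHom_ext _ rfl }

theorem encard_algHom_vanishing_le (h : Module.rank k (A ⧸ I) = N) :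
    {χ : A →ₐ[k] k | I ≤ RingHom.ker χ}.encard ≤ N :=
  (encard_algHom_vanishing_eq k I).trans_le (card_algHom_le_of_rank_eq h)

theorem encard_algHom_vanishing_eq_of_forall_exists [IsAlgClosed k]
    (h : Module.rank k (A ⧸ I) = N)
    (hI : ∀ χ : A →ₐ[k] k, I ≤ RingHom.ker χ → ∃ a, χ a ≠ 0 ∧ ∀ f, χ f = 0 → a * f ∈ I) :
    {χ : A →ₐ[k] k | I ≤ RingHom.ker χ}.encard = N := by
  have : FiniteDimensional k (A ⧸ I) := Module.finite_of_rank_eq_nat h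
  have : IsReduced (A ⧸ I) := isReduced_of_forall_maximal_annihilated fun m _ ↦ by
    obtain ⟨χ, hχ⟩ := exists_algHom_ker_eq k m
    obtain ⟨a, ha, haI⟩ := hI (χ.comp (Ideal.Quotient.mkₐ k I)) fun f hf ↦ by
      simp [RingHom.mem_ker, Ideal.Quotient.eq_zero_iff_mem.2 hf]
    refine ⟨Ideal.Quotient.mk I a, fun h ↦ ha (by rwa [← hχ] at h), fun x hx ↦ ?_⟩
    obtain ⟨f, rfl⟩ := Ideal.Quotient.mk_surjective x
    rw [← map_mul, Ideal.Quotient.eq_zero_iff_mem]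
    exact haI f (by rwa [← hχ] at hx)
  rw [encard_algHom_vanishing_eq, card_algHom_eq_of_rank_eq h]

end CharactersOfQuotient

theorem det_mul_mem_span_mulVec {n R : Type*} [Fintype n] [DecidableEq n] [CommRing R]
    (U : Matrix n n R) (c : n → R) {f : R} (hf : f ∈ Ideal.span (range c)) :
    U.det * f ∈ Ideal.span (range (U.mulVec c)) := by
  have cramer : U.adjugate.mulVec (U.mulVec c) = U.det • c := by
    rw [Matrix.mulVec_mulVec, Matrix.adjugate_mul, Matrix.smul_mulVec, Matrix.one_mulVec]
  have generators (i) : U.det * c i ∈ Ideal.span (range (U.mulVec c)) := by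
    rw [show U.det * c i = U.adjugate.mulVec (U.mulVec c) i from (congrFun cramer i).symm]
    exact sum_mem fun j _ ↦ Ideal.mul_mem_left _ _ (Ideal.subset_span (mem_range_self j))
  obtain ⟨b, rfl⟩ := Ideal.mem_span_range_iff_exists_fun.1 hf
  rw [Finset.mul_sum]
  exact sum_mem fun i _ ↦ mul_left_comm U.det (b i) _ ▸ Ideal.mul_mem_left _ _ (generators i)

section Zeros
theorem eq_polydiscEval {χ : polydiscAlgebra n →ₐ[ℂ] ℂ} (p : Fin n → OpenDisc)
    (hp : ∀ i, χ (coord i) = p i) : χ = polydiscEval fun i ↦ p i := by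
  ext f
  have span_le : Ideal.span (range fun i ↦ coordSub i (p i)) ≤ RingHom.ker χ := by
    rw [Ideal.span_le]
    rintro _ ⟨i, rfl⟩
    simp [RingHom.mem_ker, coordSub, hp]
  have := RingHom.mem_ker.1 (span_le (sub_polydiscEval_mem_span_coordSub p f))
  rwa [map_sub, AlgHom.commutes, sub_eq_zero] at this

variable {d : Fin n → ℕ} {g : Fin n → polydiscAlgebra n}

theorem norm_algHom_coord_lt_one (hg : ∀ i, ‖coord i ^ d i - g i‖ < 1)
    {χ : polydiscAlgebra n →ₐ[ℂ] ℂ} (hχ : ∀ i, χ (g i) = 0) (i : Fin n) : ‖χ (coord i)‖ < 1 := by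
  refine lt_of_pow_lt_pow_left₀ (d i) zero_le_one ?_
  calc ‖χ (coord i)‖ ^ d i = ‖χ (coord i ^ d i - g i)‖ := by
        rw [map_sub, hχ, sub_zero, map_pow, norm_pow]
    _ ≤ ‖coord i ^ d i - g i‖ := AlgHom.norm_apply_le_self χ _
    _ < 1 ^ d i := by rw [one_pow]; exact hg i

theorem exists_eq_polydiscEval (hg : ∀ i, ‖coord i ^ d i - g i‖ < 1)
    {χ : polydiscAlgebra n →ₐ[ℂ] ℂ} (hχ : ∀ i, χ (g i) = 0) :
    ∃ p : Fin n → OpenDisc, χ = polydiscEval fun i ↦ p i :=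
  ⟨fun i ↦ ⟨χ (coord i), mem_ball_zero_iff.2 (norm_algHom_coord_lt_one hg hχ i)⟩,
    eq_polydiscEval _ fun _ ↦ rfl⟩

theorem span_range_le_ker_iff {χ : polydiscAlgebra n →ₐ[ℂ] ℂ} :
    Ideal.span (range g) ≤ RingHom.ker χ ↔ ∀ i, χ (g i) = 0 :=
  Ideal.span_le.trans range_subset_iff

theorem polydiscEval_injective : Function.Injective (polydiscEval (n := n)) := fun _ _ h ↦
  funext fun i ↦ Subtype.ext (DFunLike.congr_fun h (coord i))

/-- The common zeros of `g` in the closed polydisc. -/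
def polydiscZeros (g : Fin n → polydiscAlgebra n) : Set (Polydisc n) :=
  {x | ∀ i, polydiscEval x (g i) = 0}

theorem encard_polydiscZeros (hg : ∀ i, ‖coord i ^ d i - g i‖ < 1) :
    (polydiscZeros g).encard =
      {χ : polydiscAlgebra n →ₐ[ℂ] ℂ | Ideal.span (range g) ≤ RingHom.ker χ}.encard := by
  rw [← polydiscEval_injective.encard_image]
  congr 1
  ext χ
  rw [mem_ofPred_eq, span_range_le_ker_iff]
  constructor
  · rintro ⟨x, hx, rfl⟩
    exact hx
  · intro hχ
    obtain ⟨p, rfl⟩ := exists_eq_polydiscEval hg hχ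
    exact ⟨_, hχ, rfl⟩

/-- The Jacobian matrix of `g` at a point of the open polydisc. -/
def polydiscJacobian (g : Fin n → polydiscAlgebra n) (p : Fin n → OpenDisc) :
    Matrix (Fin n) (Fin n) ℂ :=
  Matrix.of fun j i ↦ polydiscEval (fun i ↦ p i) (polydiscQuotient i (p i) (g j))

theorem exists_mulVec_coordSub_eq (p : Fin n → OpenDisc)
    (hp : ∀ i, polydiscEval (fun i ↦ p i) (g i) = 0) :
    ∃ U : Matrix (Fin n) (Fin n) (polydiscAlgebra n),
      (U.mulVec fun i ↦ coordSub i (p i)) = g ∧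
        (polydiscEval fun i ↦ p i).mapMatrix U = polydiscJacobian g p := by
  have mem_span (j) : ∃ c : Fin n → polydiscAlgebra n, ∑ i, c i * coordSub i (p i) = g j :=
    Ideal.mem_span_range_iff_exists_fun.1 <| by
      simpa [hp j] using sub_polydiscEval_mem_span_coordSub p (g j)
  choose U hU using mem_span
  refine ⟨Matrix.of U, funext hU, Matrix.ext fun j i ↦ ?_⟩
  rw [polydiscJacobian, Matrix.of_apply, ← hU j, map_sum, map_sum, Finset.sum_eq_single i]
  · have : polydiscQuotient i (p i) (coordSub i (p i)) = 1 := by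
      simpa using polydiscQuotient_coordSub_mul i (p i) 1
    simp [polydiscQuotient_mul, this]
  · intro k _ hk
    simp [polydiscQuotient_mul, polydiscQuotient_coordSub_of_ne hk.symm]
  · simp

/-- By Cramer's rule the Jacobian determinant carries the maximal ideal of `p` into `(g)`. -/
theorem exists_mul_mem_span {p : Fin n → OpenDisc}
    (hp : ∀ i, polydiscEval (fun i ↦ p i) (g i) = 0) (hdet : (polydiscJacobian g p).det ≠ 0) :
    ∃ a, polydiscEval (fun i ↦ p i) a ≠ 0 ∧
      ∀ f, polydiscEval (fun i ↦ p i) f = 0 → a * f ∈ Ideal.span (range g) := by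
  obtain ⟨U, hU, hUp⟩ := exists_mulVec_coordSub_eq p hp
  refine ⟨U.det, by rwa [AlgHom.map_det, hUp], fun f hf ↦ hU ▸ det_mul_mem_span_mulVec U _ ?_⟩
  simpa [hf] using sub_polydiscEval_mem_span_coordSub p f

theorem eventually_encard_polydiscZeros (d : Fin n → ℕ) :
    ∀ᶠ g in 𝓝 fun i : Fin n ↦ coord i ^ d i, (polydiscZeros g).encard ≤ (∏ i, d i : ℕ) ∧
      ((∀ p : Fin n → OpenDisc, (∀ i, polydiscEval (fun i ↦ p i) (g i) = 0) →
        (polydiscJacobian g p).det ≠ 0) → (polydiscZeros g).encard = (∏ i, d i : ℕ)) := by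
  have near : ∀ᶠ g in 𝓝 fun i : Fin n ↦ coord i ^ d i, ∀ i, ‖coord i ^ d i - g i‖ < 1 :=
    eventually_all.2 fun i ↦ (by fun_prop : Continuous fun g : Fin n → polydiscAlgebra n ↦
      ‖coord i ^ d i - g i‖).tendsto' _ 0 (by simp) |>.eventually_lt_const one_pos
  filter_upwards [near, eventually_rank_polydiscAlgebra_quotient_span d] with g hg rank_eq
  rw [encard_polydiscZeros hg]
  refine ⟨encard_algHom_vanishing_le rank_eq, fun hdet ↦
    encard_algHom_vanishing_eq_of_forall_exists rank_eq fun χ hχ ↦ ?_⟩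
  have hχ := span_range_le_ker_iff.1 hχ
  obtain ⟨p, rfl⟩ := exists_eq_polydiscEval hg hχ
  exact exists_mul_mem_span hχ (hdet p hχ)

end Zeros

section Count
/-- The point of `ℂⁿ` underlying a point of the closed polydisc. -/
def polydiscCoe (x : Polydisc n) : Cn n := fun i ↦ x i

theorem polydiscCoe_injective : Function.Injective (polydiscCoe (n := n)) := fun _ _ h ↦
  funext fun i ↦ Subtype.ext (congrFun h i)

theorem range_polydiscCoe : range (polydiscCoe (n := n)) = closedBall 0 1 := by
  ext x
  simp only [mem_closedBall_zero_iff, pi_norm_le_iff_of_nonneg zero_le_one]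
  exact ⟨by rintro ⟨x, rfl⟩ i; exact mem_closedBall_zero_iff.1 (x i).2,
    fun h ↦ ⟨fun i ↦ ⟨x i, mem_closedBall_zero_iff.2 (h i)⟩, rfl⟩⟩

theorem polydiscCoe_mem (x : Polydisc n) : polydiscCoe x ∈ closedBall (0 : Cn n) 1 :=
  range_polydiscCoe ▸ mem_range_self x

theorem polydiscCoe_update (x : Polydisc n) (i : Fin n) (z : ClosedDisc) :
    polydiscCoe (Function.update x i z) = Function.update (polydiscCoe x) i (z : ℂ) :=
  funext fun j ↦ Function.apply_update (fun _ ↦ Subtype.val) x i z j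

/-- The restriction to the closed polydisc of a map that is holomorphic on it, as a tuple of
elements of the polydisc algebra. -/
def polydiscRestrict (g : Cn n → Cn n)
    (hg : ∀ x ∈ closedBall (0 : Cn n) 1, DifferentiableAt ℂ g x) (j : Fin n) :
    polydiscAlgebra n :=
  ⟨⟨fun x ↦ g (polydiscCoe x) j, by
    refine continuous_iff_continuousAt.2 fun x ↦ ?_
    have : ContinuousAt (polydiscCoe (n := n)) x := continuousAt_pi.2 fun i ↦
      (continuous_subtype_val.comp (continuous_apply i)).continuousAt
    exact (continuousAt_apply j _).comp ((hg _ (polydiscCoe_mem x)).continuousAt.comp this)⟩,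
  mem_polydiscAlgebra.2 fun x i ↦ by
    refine differentiableOn_discExtend_congr
      (F := fun z ↦ g (Function.update (polydiscCoe x) i z) j)
      (fun z ↦ by simp [polydiscCoe_update]) fun z hz ↦ DifferentiableAt.differentiableWithinAt ?_
    have := hg _ (polydiscCoe_mem (Function.update x i ⟨z, ball_subset_closedBall hz⟩))
    rw [polydiscCoe_update] at this
    exact differentiableAt_pi.1 (this.comp z (hasDerivAt_update _ i z).differentiableAt) j⟩

section Restrict
variable {g : Cn n → Cn n} {hg : ∀ x ∈ closedBall (0 : Cn n) 1, DifferentiableAt ℂ g x}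

theorem image_polydiscZeros_polydiscRestrict :
    polydiscCoe '' polydiscZeros (polydiscRestrict g hg) =
      {x ∈ closedBall (0 : Cn n) 1 | g x = 0} := by
  have : polydiscZeros (polydiscRestrict g hg) = polydiscCoe ⁻¹' {x | g x = 0} :=
    Set.ext fun x ↦ funext_iff.symm
  rw [this, image_preimage_eq_range_inter, range_polydiscCoe]
  rfl

theorem polydiscJacobian_polydiscRestrict (p : Fin n → OpenDisc) :
    polydiscJacobian (polydiscRestrict g hg) p =
      LinearMap.toMatrix' (fderiv ℂ g (polydiscCoe fun i ↦ p i)) := by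
  ext j i
  set x : Polydisc n := fun i ↦ p i
  have slice_eq : discExtend (discSlice x i (polydiscRestrict g hg j)).1 =ᶠ[𝓝 (p i : ℂ)]
      fun z ↦ g (Function.update (polydiscCoe x) i z) j := by
    refine eventuallyEq_of_mem (isOpen_ball.mem_nhds (p i).2) fun z hz ↦
      eqOn_discExtend (F := fun z ↦ g (Function.update (polydiscCoe x) i z) j) (fun w ↦ ?_)
        (ball_subset_closedBall hz)
    rw [coe_discSlice_apply, ← polydiscCoe_update]
    rfl
  have deriv_slice : HasDerivAt (fun z ↦ g (Function.update (polydiscCoe x) i z) j)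
      (fderiv ℂ g (polydiscCoe x) (Pi.single i 1) j) (p i) := by
    have update_eq : Function.update (polydiscCoe x) i (p i : ℂ) = polydiscCoe x :=
      Function.update_eq_self i _
    refine hasDerivAt_pi.1 (HasFDerivAt.comp_hasDerivAt (p i : ℂ) ?_
      (hasDerivAt_update (polydiscCoe x) i (p i : ℂ))) j
    rw [update_eq]
    exact (hg _ (polydiscCoe_mem x)).hasFDerivAt
  calc polydiscJacobian (polydiscRestrict g hg) p j i
      = deriv (discExtend (discSlice x i (polydiscRestrict g hg j)).1) (p i) :=
        discDslope_self (p i) _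
    _ = fderiv ℂ g (polydiscCoe x) (Pi.single i 1) j := by
        rw [slice_eq.deriv_eq, deriv_slice.deriv]
    _ = _ := (LinearMap.toMatrix'_apply _ j i).symm

end Restrict

/-- The map `x ↦ (x i ^ d i)`. -/
def powMap (d : Fin n → ℕ) (x : Cn n) : Cn n := fun i ↦ x i ^ d i

/-- On `V`, the map `g` has at most `N` zeros, and exactly `N` if they are all simple. -/
def HasZeroCountOn (g : Cn n → Cn n) (V : Set (Cn n)) (N : ℕ) : Prop :=
  {x ∈ V | g x = 0}.encard ≤ N ∧ (IsRegularValueOn g V 0 → {x ∈ V | g x = 0}.encard = N)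

theorem exists_forall_hasZeroCountOn_closedBall (d : Fin n → ℕ) :
    ∃ η > 0, ∀ g : Cn n → Cn n, (∀ x ∈ closedBall (0 : Cn n) 1, DifferentiableAt ℂ g x) →
      (∀ x ∈ closedBall (0 : Cn n) 1, ‖g x - powMap d x‖ ≤ η) →
      HasZeroCountOn g (closedBall 0 1) (∏ i, d i) := by
  obtain ⟨η, hη, H⟩ := Metric.nhds_basis_closedBall.eventually_iff.1
    (eventually_encard_polydiscZeros d)
  refine ⟨η, hη, fun g hg hgd ↦ ?_⟩
  have near : polydiscRestrict g hg ∈ closedBall (fun i ↦ coord i ^ d i) η := by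
    refine (dist_pi_le_iff hη.le).2 fun i ↦ ?_
    rw [dist_eq_norm]
    exact (ContinuousMap.norm_le _ hη.le).2 fun x ↦
      (norm_le_pi_norm (g (polydiscCoe x) - powMap d (polydiscCoe x)) i).trans
        (hgd _ (polydiscCoe_mem x))
  obtain ⟨le, eq⟩ := H near
  rw [HasZeroCountOn, ← image_polydiscZeros_polydiscRestrict (hg := hg),
    polydiscCoe_injective.encard_image]
  refine ⟨le, fun hreg ↦ eq fun p hp ↦ ?_⟩
  have := hreg _ (polydiscCoe_mem _) (funext hp)
  rw [polydiscJacobian_polydiscRestrict]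
  rw [LinearMap.det_toMatrix']
  exact (LinearMap.isUnit_det _ ((Module.End.isUnit_iff _).2 this)).ne_zero

end Count

section ZeroCount
/-- `h` has multiplicity `N` at `0`, stably: in arbitrarily small neighbourhoods `V` of `0`, every
holomorphic map uniformly close to `h` has a zero count of `N`. -/
def HasStableZeroCount (h : Cn n → Cn n) (N : ℕ) : Prop :=
  ∀ U ∈ 𝓝 (0 : Cn n), ∃ V ∈ 𝓝 (0 : Cn n), V ⊆ U ∧ ∃ ε > 0, ∀ g : Cn n → Cn n,
    (∀ x ∈ V, DifferentiableAt ℂ g x) → (∀ x ∈ V, ‖g x - h x‖ ≤ ε) → HasZeroCountOn g V N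

theorem HasZeroCountOn.image (A σ : Cn n ≃L[ℂ] Cn n) {g : Cn n → Cn n} {V : Set (Cn n)} {N : ℕ}
    (H : HasZeroCountOn (A ∘ g ∘ σ) V N) : HasZeroCountOn g (σ '' V) N := by
  have zeros_eq : {x ∈ σ '' V | g x = 0} = σ '' {y ∈ V | (A ∘ g ∘ σ) y = 0} := by
    ext x
    simp [Set.mem_image, and_assoc, A.map_eq_zero_iff]
    aesop
  rw [HasZeroCountOn, zeros_eq, σ.injective.encard_image]
  refine ⟨H.1, fun hreg ↦ H.2 fun y hy hgy ↦ ?_⟩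
  have bij := hreg (σ y) (mem_image_of_mem σ hy) ((A.map_eq_zero_iff).1 hgy)
  rw [A.comp_fderiv, σ.comp_right_fderiv]
  exact A.bijective.comp (bij.comp σ.bijective)

theorem exists_forall_pow_eq {d : Fin n → ℕ} (hd : ∀ i, d i ≠ 0) {r : ℝ} (hr : 0 < r) :
    ∃ t > 0, ∃ τ : Fin n → ℝ, ∀ i, 0 < τ i ∧ τ i ≤ r ∧ τ i ^ d i = t := by
  set s := min r 1
  have hs : 0 < s := lt_min hr one_pos
  refine ⟨s ^ ∏ i, d i, pow_pos hs _, fun i ↦ s ^ ∏ j ∈ Finset.univ.erase i, d j,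
    fun i ↦ ⟨pow_pos hs _, ?_, ?_⟩⟩
  · exact (pow_le_of_le_one hs.le (min_le_right _ _)
      (Finset.prod_ne_zero_iff.2 fun j _ ↦ hd j)).trans (min_le_left _ _)
  · rw [← pow_mul, Finset.prod_erase_mul _ _ (Finset.mem_univ i)]

theorem norm_powMap_le_one (d : Fin n → ℕ) {x : Cn n} (hx : x ∈ closedBall 0 1) :
    ‖powMap d x‖ ≤ 1 := by
  refine (pi_norm_le_iff_of_nonneg zero_le_one).2 fun i ↦ ?_
  rw [powMap, norm_pow]
  exact pow_le_one₀ (norm_nonneg _) ((norm_le_pi_norm x i).trans (mem_closedBall_zero_iff.1 hx))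

theorem exists_scaling_powMap {d : Fin n → ℕ} (hd : ∀ i, d i ≠ 0) {r : ℝ} (hr : 0 < r) :
    ∃ t > (0 : ℝ), ∃ σ : Cn n ≃L[ℂ] Cn n, (∀ x, ‖σ x‖ ≤ r * ‖x‖) ∧
      ∀ x, powMap d (σ x) = (t : ℂ) • powMap d x := by
  obtain ⟨t, ht, τ, hτ⟩ := exists_forall_pow_eq hd hr
  refine ⟨t, ht, .piCongrRight fun i ↦ .smulLeft (Units.mk0 (τ i : ℂ)
    (Complex.ofReal_ne_zero.2 (hτ i).1.ne')), fun x ↦ ?_, fun x ↦ funext fun i ↦ ?_⟩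
  · refine (pi_norm_le_iff_of_nonneg (by positivity)).2 fun i ↦ ?_
    calc ‖(τ i : ℂ) * x i‖ = τ i * ‖x i‖ := by
          rw [norm_mul, Complex.norm_of_nonneg (hτ i).1.le]
      _ ≤ r * ‖x‖ := by
          gcongr
          exacts [(hτ i).2.1, norm_le_pi_norm x i]
  · calc ((τ i : ℂ) * x i) ^ d i = (t : ℂ) * x i ^ d i := by
          rw [mul_pow, ← (hτ i).2.2, Complex.ofReal_pow]

theorem hasStableZeroCount_of_isLittleO {d : Fin n → ℕ} (hd : ∀ i, d i ≠ 0)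
    (L : Cn n ≃L[ℂ] Cn n) {h : Cn n → Cn n}
    (hL : (fun x ↦ h x - L (powMap d x)) =o[𝓝 0] powMap d) :
    HasStableZeroCount h (∏ i, d i) := by
  intro U hU
  obtain ⟨η, hη, count⟩ := exists_forall_hasZeroCountOn_closedBall d
  set K := ‖(L.symm : Cn n →L[ℂ] Cn n)‖
  set c := η / (2 * (K + 1))
  have hK : 0 ≤ K := norm_nonneg _
  have hc : 0 < c := by positivity
  have hKc : K * (c + c) ≤ η := by
    calc K * (c + c) ≤ (K + 1) * (c + c) := by gcongr; linarith
      _ = η := by simp only [c]; field_simp; ring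
  obtain ⟨r, hr, hball⟩ := nhds_basis_closedBall.mem_iff.1 (inter_mem hU (hL.def hc))
  obtain ⟨t, ht, σ, hσr, hσ⟩ := exists_scaling_powMap hd hr
  have hV {y} (hy : y ∈ closedBall (0 : Cn n) 1) : σ y ∈ closedBall (0 : Cn n) r := by
    rw [mem_closedBall_zero_iff] at hy ⊢
    exact (hσr y).trans (mul_le_of_le_one_right hr.le hy)
  refine ⟨σ '' closedBall 0 1, ?_, ?_, c * t, by positivity, fun g hg hgh ↦ ?_⟩
  · simpa using σ.toHomeomorph.isOpenMap.image_mem_nhds (closedBall_mem_nhds (0 : Cn n) one_pos)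
  · exact image_subset_iff.2 fun y hy ↦ (hball (hV hy)).1
  let A : Cn n ≃L[ℂ] Cn n := L.symm.trans
    (.smulLeft (Units.mk0 (t : ℂ) (Complex.ofReal_ne_zero.2 ht.ne'))⁻¹)
  refine HasZeroCountOn.image A σ (count _ (fun y hy ↦ ?_) fun y hy ↦ ?_)
  · exact A.differentiableAt.comp y ((hg _ (mem_image_of_mem σ hy)).comp y σ.differentiableAt)
  have dist_model : ‖g (σ y) - L (powMap d (σ y))‖ ≤ (c + c) * t := by
    have small : ‖h (σ y) - L (powMap d (σ y))‖ ≤ c * t := by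
      refine (hball (hV hy)).2.trans ?_
      rw [hσ, norm_smul, Complex.norm_of_nonneg ht.le]
      gcongr
      exact mul_le_of_le_one_right ht.le (norm_powMap_le_one d hy)
    linarith [norm_sub_le_norm_sub_add_norm_sub (g (σ y)) (h (σ y)) (L (powMap d (σ y))),
      hgh _ (mem_image_of_mem σ hy)]
  have factor : A (g (σ y)) - powMap d y =
      (t : ℂ)⁻¹ • L.symm (g (σ y) - L (powMap d (σ y))) := by
    rw [map_sub, L.symm_apply_apply, hσ, smul_sub, inv_smul_smul₀ (by exact_mod_cast ht.ne')]
    rfl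
  calc ‖A (g (σ y)) - powMap d y‖ ≤ t⁻¹ * (K * ((c + c) * t)) := by
        rw [factor, norm_smul, norm_inv, Complex.norm_of_nonneg ht.le]
        gcongr
        exact (L.symm : Cn n →L[ℂ] Cn n).le_opNorm_of_le dist_model
    _ = K * (c + c) := by field_simp
    _ ≤ η := hKc

end ZeroCount

section ZeroOrder
theorem exists_pos_forall_norm_lt_imp_mem {X E : Type*} [TopologicalSpace X]
    [NormedAddCommGroup E] {K V : Set X} {p : X} {h : X → E} (hK : IsCompact K)
    (hh : ContinuousOn h K) (hz : ∀ x ∈ K, h x = 0 → x = p) (hV : V ∈ 𝓝 p) :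
    ∃ c > 0, ∀ x ∈ K, ‖h x‖ < c → x ∈ V := by
  obtain ⟨c, hc, hle⟩ := (hK.diff isOpen_interior (t := interior V)).exists_forall_le'
    (hh.mono sdiff_subset).norm (a := 0) fun x hx ↦ norm_pos_iff.2 fun h0 ↦
      hx.2 (hz x hx.1 h0 ▸ mem_interior_iff_mem_nhds.2 hV)
  exact ⟨c, hc, fun x hx hlt ↦ by_contra fun hxV ↦
    (hle x ⟨hx, fun hxi ↦ hxV (interior_subset hxi)⟩).not_gt hlt⟩

theorem bijective_of_det_restrictScalars_ne_zero {A : Cn n →L[ℂ] Cn n}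
    (h : (A.restrictScalars ℝ).det ≠ 0) : Function.Bijective A :=
  (Module.End.isUnit_iff (A.restrictScalars ℝ : Cn n →ₗ[ℝ] Cn n)).1
    ((LinearMap.isUnit_iff_isUnit_det _).2 h.isUnit)

/-- Sard's theorem in equal dimensions. -/
theorem exists_isRegularValueOn {h : Cn n → Cn n} {s : Set (Cn n)}
    (hd : ∀ x ∈ s, DifferentiableAt ℂ h x) {ε : ℝ} (hε : 0 < ε) :
    ∃ q : Cn n, ‖q‖ < ε ∧ IsRegularValueOn h s q := by
  set crit : Set (Cn n) := {x | x ∈ s ∧ ¬ Function.Bijective (fderiv ℂ h x)}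
  have image_null : MeasureTheory.volume (h '' crit) = 0 :=
    MeasureTheory.addHaar_image_eq_zero_of_det_fderivWithin_eq_zero _
      (fun x hx ↦ ((hd x hx.1).hasFDerivAt.restrictScalars ℝ).hasFDerivWithinAt)
      fun x hx ↦ by_contra fun hne ↦ hx.2 (bijective_of_det_restrictScalars_ne_zero hne)
  obtain ⟨q, hq, hqc⟩ : ∃ q ∈ ball (0 : Cn n) ε, q ∉ h '' crit := not_subset.1 fun hsub ↦
    (measure_ball_pos MeasureTheory.volume (0 : Cn n) hε).ne'
      (MeasureTheory.measure_mono_null hsub image_null)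
  exact ⟨q, mem_ball_zero_iff.1 hq, fun x hx hxq ↦ by_contra fun hb ↦ hqc ⟨x, ⟨hx, hb⟩, hxq⟩⟩

namespace HasStableZeroCount
variable {h : Cn n → Cn n} {N : ℕ} (H : HasStableZeroCount h N)
include H

theorem eventually_ne_zero (ha : AnalyticAt ℂ h 0) : ∀ᶠ x in 𝓝[≠] (0 : Cn n), h x ≠ 0 := by
  obtain ⟨V, hV, hVd, ε, hε, count⟩ := H _ ha.eventually_analyticAt
  have finite : {x ∈ V | h x = 0}.Finite := by
    refine finite_of_encard_le_coe (count h (fun x hx ↦ (hVd hx).differentiableAt) fun x _ ↦ ?_).1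
    simpa using hε.le
  have away : ({x ∈ V | h x = 0} \ {0})ᶜ ∈ 𝓝 (0 : Cn n) :=
    finite.sdiff.isClosed.compl_mem_nhds fun h0 ↦ h0.2 rfl
  filter_upwards [nhdsWithin_le_nhds hV, nhdsWithin_le_nhds away, self_mem_nhdsWithin]
    with x hxV hx hx0 hzero
  exact hx ⟨⟨hxV, hzero⟩, hx0⟩

theorem ncard_eq {r : ℝ} (hr : 0 < r) (ha : AnalyticOnNhd ℂ h (closedBall 0 r))
    (hz : ∀ x ∈ closedBall 0 r, h x = 0 → x = 0) :
    ∃ δ > 0, ∀ q : Cn n, ‖q‖ < δ → IsRegularValueOn h (ball 0 r) q →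
      {x ∈ ball 0 r | h x = q}.ncard = N := by
  obtain ⟨V, hV, hVr, ε, hε, count⟩ := H _ (ball_mem_nhds 0 hr)
  obtain ⟨c, hc, hcV⟩ := exists_pos_forall_norm_lt_imp_mem (isCompact_closedBall 0 r)
    ha.continuousOn hz hV
  refine ⟨min ε c, lt_min hε hc, fun q hq hreg ↦ ?_⟩
  have fiber_eq : {x ∈ ball 0 r | h x = q} = {x ∈ V | h x - q = 0} := by
    ext x
    simp only [mem_ofPred_eq, sub_eq_zero]
    exact ⟨fun ⟨hx, hxq⟩ ↦ ⟨hcV x (ball_subset_closedBall hx)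
      (hxq ▸ hq.trans_le (min_le_right _ _)), hxq⟩, fun ⟨hx, hxq⟩ ↦ ⟨hVr hx, hxq⟩⟩
  have zeroCount : HasZeroCountOn (fun x ↦ h x - q) V N := by
    refine count _ (fun x hx ↦ ?_) fun x _ ↦ ?_
    · exact ((ha x (ball_subset_closedBall (hVr hx))).differentiableAt).sub_const q
    · simpa using (hq.trans_le (min_le_left _ _)).le
  rw [fiber_eq, ncard_def, zeroCount.2 fun x hx hxq ↦ ?_, ENat.toNat_natCast]
  rw [fderiv_sub_const]
  exact hreg x (hVr hx) (sub_eq_zero.1 hxq)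

theorem hasZeroOrder (ha : AnalyticAt ℂ h 0) (h0 : h 0 = 0) : HasZeroOrder h 0 N := by
  obtain ⟨r, hr, hball⟩ := nhds_basis_closedBall.eventually_iff.1
    (ha.eventually_analyticAt.and (eventually_nhdsWithin_iff.1 (H.eventually_ne_zero ha)))
  have hz : ∀ x ∈ closedBall 0 r, h x = 0 → x = 0 := fun x hx ↦ not_imp_not.1 (hball hx).2
  have an : AnalyticOnNhd ℂ h (closedBall 0 r) := fun x hx ↦ (hball hx).1
  exact ⟨r, hr, an, h0, hz, fun ε hε ↦ exists_isRegularValueOn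
    (fun x hx ↦ (an x (ball_subset_closedBall hx)).differentiableAt) hε, H.ncard_eq hr an hz⟩

theorem zeroOrder_eq (ha : AnalyticAt ℂ h 0) (h0 : h 0 = 0) : zeroOrder h 0 = N := by
  have unique : {m | HasZeroOrder h 0 m} = {N} := by
    refine eq_singleton_iff_unique_mem.2 ⟨H.hasZeroOrder ha h0, ?_⟩
    rintro m ⟨r, hr, an, -, hz, hreg, δ, hδ, hm⟩
    obtain ⟨δ', hδ', hN⟩ := H.ncard_eq hr an hz
    obtain ⟨q, hq, hqreg⟩ := hreg (min δ δ') (lt_min hδ hδ')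
    rw [← hm q (hq.trans_le (min_le_left _ _)) hqreg,
      hN q (hq.trans_le (min_le_right _ _)) hqreg]
  rw [zeroOrder, unique, csInf_singleton]

end HasStableZeroCount

theorem hasStableZeroCount_one {h : Cn n → Cn n} {L : Cn n ≃L[ℂ] Cn n}
    (hL : HasFDerivAt h (L : Cn n →L[ℂ] Cn n) 0) (h0 : h 0 = 0) : HasStableZeroCount h 1 := by
  have powMap_one : powMap (fun _ : Fin n ↦ 1) = id := by ext x i; simp [powMap]
  have := hasStableZeroCount_of_isLittleO (d := fun _ : Fin n ↦ 1) (fun _ ↦ one_ne_zero) L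
    (h := h) (by simpa [powMap_one, h0, ← Function.id_def] using hL.isLittleO)
  simpa using this

end ZeroOrder

section Iterate
variable {X : Type*} [PseudoMetricSpace X] {f : X → X} {fk : ℕ → X → X} {s K : Set X}

theorem eventually_forall_dist_iterate_lt (hf : Continuous f) (hK : IsCompact K) (hsK : s ⊆ K)
    (hu : TendstoUniformlyOn fk f atTop s) (i : ℕ) {ε : ℝ} (hε : 0 < ε) :
    ∀ᶠ k in atTop, ∀ x, (∀ j < i, (fk k)^[j] x ∈ s) → dist (f^[i] x) ((fk k)^[i] x) < ε := by
  induction i generalizing ε with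
  | zero => simp [hε]
  | succ i ih =>
    obtain ⟨δ, hδ, cont⟩ := mem_uniformity_dist.1 <| hK.uniformContinuousAt_of_continuousAt f
      (fun x _ ↦ hf.continuousAt) (dist_mem_uniformity (half_pos hε))
    filter_upwards [ih hδ, tendstoUniformlyOn_iff.1 hu _ (half_pos hε)] with k close approx x hx
    set y := (fk k)^[i] x
    have hy : y ∈ s := hx i i.lt_succ_self
    have dist_lt : dist y (f^[i] x) < δ :=
      (dist_comm _ _).trans_lt (close x fun j hj ↦ hx j (hj.trans i.lt_succ_self))
    rw [Function.iterate_succ_apply', Function.iterate_succ_apply']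
    calc dist (f (f^[i] x)) (fk k y) ≤ dist (f y) (f (f^[i] x)) + dist (f y) (fk k y) :=
          dist_triangle_left _ _ _
      _ < ε / 2 + ε / 2 := add_lt_add (cont dist_lt (hsK hy)) (approx y hy)
      _ = ε := add_halves ε

theorem eventually_forall_iterate_mem {p : X} (hf : Continuous f) (hfp : f p = p)
    (hK : IsCompact K) (hsK : s ⊆ K) (hs : s ∈ 𝓝 p) (hu : TendstoUniformlyOn fk f atTop s)
    (i : ℕ) :
    ∃ W ∈ 𝓝 p, ∀ᶠ k in atTop, ∀ x ∈ W, ∀ j < i, (fk k)^[j] x ∈ s := by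
  induction i with
  | zero => exact ⟨univ, univ_mem, by simp⟩
  | succ i ih =>
    obtain ⟨W, hW, stay⟩ := ih
    obtain ⟨r, hr, hball⟩ := Metric.mem_nhds_iff.1 hs
    have fi_tendsto : Tendsto f^[i] (𝓝 p) (𝓝 p) := by
      simpa only [Function.iterate_fixed hfp] using (hf.iterate i).tendsto p
    refine ⟨_, inter_mem hW (fi_tendsto (ball_mem_nhds p (half_pos hr))), ?_⟩
    filter_upwards [stay, eventually_forall_dist_iterate_lt hf hK hsK hu i (half_pos hr)]
      with k stay close x hx j hj
    rcases Nat.lt_succ_iff_lt_or_eq.1 hj with hj | rfl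
    · exact stay x hx.1 j hj
    · apply hball
      calc dist ((fk k)^[j] x) p ≤ dist (f^[j] x) ((fk k)^[j] x) + dist (f^[j] x) p :=
            dist_triangle_left _ _ _
        _ < r / 2 + r / 2 := add_lt_add (close x (stay x hx.1)) hx.2
        _ = r := add_halves r

end Iterate

theorem analyticAt_iterate {𝕜 E : Type*} [NontriviallyNormedField 𝕜] [NormedAddCommGroup E]
    [NormedSpace 𝕜 E] {f : E → E} {U : Set E} (hf : AnalyticOnNhd 𝕜 f U) (i : ℕ) {x : E}
    (hx : ∀ j < i, f^[j] x ∈ U) : AnalyticAt 𝕜 f^[i] x := by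
  induction i with
  | zero => exact analyticAt_id
  | succ i ih =>
    rw [Function.iterate_succ']
    exact (hf _ (hx i i.lt_succ_self)).comp (ih fun j hj ↦ hx j (hj.trans i.lt_succ_self))

section Orbits
variable {M m N : ℕ} {f : Cn n → Cn n}

namespace ExactPeriodicPt
variable {x : Cn n} (hx : ExactPeriodicPt f M x)
include hx

theorem minimalPeriod_eq (hM : 0 < M) : Function.minimalPeriod f x = M := by
  have per : Function.IsPeriodicPt f M x := hx.1
  refine (per.minimalPeriod_le hM).eq_of_not_lt fun hlt ↦ hx.2 _ ?_ hlt ?_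
  · exact per.minimalPeriod_pos hM
  · exact Function.isPeriodicPt_minimalPeriod f x

theorem iterate_ne_zero (hM : 1 < M) (hf0 : f 0 = 0) (j : ℕ) : f^[j] x ≠ 0 := fun h0 ↦ by
  have hM0 : 0 < M := one_pos.trans hM
  have period_eq := Function.minimalPeriod_apply_iterate
    (Function.mk_mem_periodicPts hM0 (hx.1 : Function.IsPeriodicPt f M x)) j
  rw [h0, hx.minimalPeriod_eq hM0, Function.minimalPeriod_eq_one_iff_isFixedPt.2 hf0] at period_eq
  exact hM.ne period_eq

end ExactPeriodicPt

theorem injective_iterate_of_disjoint_orbits (hM : 0 < M) {p : Fin m → Cn n}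
    (hp : ∀ i, ExactPeriodicPt f M (p i)) (hd : ∀ i j, i ≠ j → ∀ l < M, f^[l] (p i) ≠ p j) :
    Function.Injective fun a : Fin m × Fin M ↦ f^[a.2] (p a.1) := by
  rintro ⟨i, j⟩ ⟨i', j'⟩ (h : f^[j] (p i) = f^[j'] (p i'))
  have per (i) : Function.IsPeriodicPt f M (p i) := (hp i).1
  have hit : f^[(M - j' + j) % M] (p i) = p i' := by
    rw [(per i).iterate_mod_apply, Function.iterate_add_apply, h, ← Function.iterate_add_apply,
      Nat.sub_add_cancel j'.2.le]
    exact per i'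
  obtain rfl : i = i' := by_contra fun hii ↦ hd i i' hii _ (Nat.mod_lt _ hM) hit
  have inj := Function.iterate_injOn_Iio_minimalPeriod (f := f) (x := p i)
  rw [(hp i).minimalPeriod_eq hM] at inj
  rw [Fin.ext (inj j.2 j'.2 h)]

theorem AtLeastOrbits.le_encard (hM : 1 < M) (hf0 : f 0 = 0) {B : Set (Cn n)} (hB : 0 ∈ B)
    (h : AtLeastOrbits f M m B) :
    (m * M + 1 : ℕ) ≤ {x | f^[M] x = x ∧ ∀ j, f^[j] x ∈ B}.encard := by
  obtain ⟨p, hp, hd⟩ := h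
  set Z := {x | f^[M] x = x ∧ ∀ j, f^[j] x ∈ B}
  set orbits := (fun a : Fin m × Fin M ↦ f^[a.2] (p a.1)) '' univ
  have per (i) : Function.IsPeriodicPt f M (p i) := (hp i).1.1
  have orbits_sub : orbits ⊆ Z := by
    rintro _ ⟨⟨i, j⟩, -, rfl⟩
    refine ⟨(per i).apply_iterate j, fun l ↦ ?_⟩
    change f^[l] (f^[j] (p i)) ∈ B
    rw [← Function.iterate_add_apply, ← (per i).iterate_mod_apply]
    exact (hp i).2 _ (Nat.mod_lt _ (one_pos.trans hM))
  have zero_mem : (0 : Cn n) ∈ Z :=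
    ⟨Function.iterate_fixed hf0 M, fun j ↦ (Function.iterate_fixed hf0 j).symm ▸ hB⟩
  have zero_notMem : (0 : Cn n) ∉ orbits := by
    rintro ⟨⟨i, j⟩, -, h0⟩
    exact (hp i).1.iterate_ne_zero hM hf0 j h0
  calc ((m * M + 1 : ℕ) : ℕ∞) = (insert 0 orbits).encard := by
        rw [encard_insert_of_notMem zero_notMem, (injective_iterate_of_disjoint_orbits
          (one_pos.trans hM) (fun i ↦ (hp i).1) hd).encard_image]
        simp [encard_univ]
    _ ≤ Z.encard := encard_le_encard (insert_subset zero_mem orbits_sub)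

theorem HasStableZeroCount.mul_add_one_le
    (H : HasStableZeroCount (fun x ↦ x - f^[M] x) N) (hf : Continuous f) (hf0 : f 0 = 0)
    (hM : 1 < M) {r : ℝ} (hr : 0 < r) (hz : ∀ x ∈ closedBall (0 : Cn n) r, f^[M] x = x → x = 0)
    {fk : ℕ → Cn n → Cn n} (hfk : ∀ k, AnalyticOnNhd ℂ (fk k) (ball 0 r) ∧ fk k 0 = 0)
    (hu : TendstoUniformlyOn fk f atTop (ball 0 r))
    (ho : ∀ k, AtLeastOrbits (fk k) M m (ball 0 r)) : m * M + 1 ≤ N := by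
  have hK : IsCompact (closedBall (0 : Cn n) r) := isCompact_closedBall 0 r
  have hsK : ball (0 : Cn n) r ⊆ closedBall 0 r := ball_subset_closedBall
  have hs : ball (0 : Cn n) r ∈ 𝓝 0 := ball_mem_nhds 0 hr
  obtain ⟨W, hW, stay⟩ := eventually_forall_iterate_mem hf hf0 hK hsK hs hu M
  obtain ⟨V, hV, hVW, ε, hε, count⟩ := H W hW
  obtain ⟨c, hc, hcV⟩ := exists_pos_forall_norm_lt_imp_mem hK (h := fun x ↦ x - f^[M] x)
    (continuous_id.sub (hf.iterate M)).continuousOn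
    (fun x hx h0 ↦ hz x hx (sub_eq_zero.1 h0).symm) hV
  obtain ⟨k, stay, close⟩ := (stay.and
    (eventually_forall_dist_iterate_lt hf hK hsK hu M (lt_min hε hc))).exists
  have zeroCount : HasZeroCountOn (fun x ↦ x - (fk k)^[M] x) V N := by
    refine count _ (fun x hx ↦ ?_) fun x hx ↦ ?_
    · exact differentiableAt_id.sub
        (analyticAt_iterate (hfk k).1 M (stay x (hVW hx))).differentiableAt
    · rw [sub_sub_sub_cancel_left, ← dist_eq_norm]
      exact ((close x (stay x (hVW hx))).trans_le (min_le_left _ _)).le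
  have sub_zeros : {x | (fk k)^[M] x = x ∧ ∀ j, (fk k)^[j] x ∈ ball 0 r} ⊆
      {x ∈ V | x - (fk k)^[M] x = 0} := by
    rintro x ⟨hx, hxr⟩
    refine ⟨hcV x (hsK (hxr 0)) ?_, sub_eq_zero.2 hx.symm⟩
    have := (close x fun j _ ↦ hxr j).trans_le (min_le_right _ _)
    rwa [hx, dist_comm, dist_eq_norm] at this
  exact_mod_cast ((ho k).le_encard hM (hfk k).2 (mem_ball_self hr)).trans
    ((encard_le_encard sub_zeros).trans zeroCount.1)

end Orbits

section Index
variable {M N : ℕ} {f : Cn n → Cn n}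

namespace HasStableZeroCount
variable (H : HasStableZeroCount (fun x ↦ x - f x) N)
include H

theorem isolatedFixedPtAt0 (hf : AnalyticAt ℂ f 0) (hf0 : f 0 = 0) : IsolatedFixedPtAt0 f :=
  ⟨hf0, (H.eventually_ne_zero (analyticAt_id.sub hf)).mono fun _ hx h ↦ hx (sub_eq_zero.2 h.symm)⟩

theorem fixedPointIndex_eq (hf : AnalyticAt ℂ f 0) (hf0 : f 0 = 0) : fixedPointIndex f 0 = N :=
  H.zeroOrder_eq (analyticAt_id.sub hf) (by simp [hf0])

end HasStableZeroCount

theorem doldIndex_eq_sub (hM : 1 < M) {a : ℕ}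
    (h : ∀ j, 0 < j → j < M → fixedPointIndex f^[j] 0 = a) :
    doldIndex f M = fixedPointIndex f^[M] 0 - a := by
  have index_eq : ∀ τ ∈ M.primeFactors.powerset, τ ≠ ∅ →
      fixedPointIndex f^[M / ∏ p ∈ τ, p] 0 = a := by
    intro τ hτ hne
    have hsub := Finset.mem_powerset.1 hτ
    obtain ⟨p, hp⟩ := Finset.nonempty_iff_ne_empty.2 hne
    have hdvd : ∏ p ∈ τ, p ∣ M :=
      (Finset.prod_dvd_prod_of_subset _ _ _ hsub).trans (Nat.prod_primeFactors_dvd M)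
    have hpos : 0 < ∏ p ∈ τ, p := Nat.pos_of_dvd_of_pos hdvd (one_pos.trans hM)
    have hgt : 1 < ∏ p ∈ τ, p := (Nat.prime_of_mem_primeFactors (hsub hp)).one_lt.trans_le
      (Nat.le_of_dvd hpos (Finset.dvd_prod_of_mem _ hp))
    exact h _ (Nat.div_pos (Nat.le_of_dvd (one_pos.trans hM) hdvd) hpos)
      (Nat.div_lt_self (one_pos.trans hM) hgt)
  have term_eq : ∀ τ ∈ M.primeFactors.powerset,
      (-1 : ℤ) ^ τ.card * (fixedPointIndex f^[M / ∏ p ∈ τ, p] 0 : ℤ) =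
        (-1) ^ τ.card * a + if τ = ∅ then (fixedPointIndex f^[M] 0 - a : ℤ) else 0 := by
    intro τ hτ
    by_cases hne : τ = ∅
    · simp [hne]
    · simp [hne, index_eq τ hτ hne]
  have primeFactors_ne : M.primeFactors ≠ ∅ := by
    simp only [ne_eq, Nat.primeFactors_eq_empty]
    omega
  rw [doldIndex, Finset.sum_congr rfl term_eq, Finset.sum_add_distrib, ← Finset.sum_mul,
    Finset.sum_powerset_neg_one_pow_card, if_neg primeFactors_ne, Finset.sum_ite_eq']
  simp

theorem hiddenOrbits_eq_one (hf : Continuous f) (hf0 : f 0 = 0) (hfa : AnalyticAt ℂ f^[M] 0)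
    (hM : 1 < M) (H : HasStableZeroCount (fun x ↦ x - f^[M] x) N) (hN : N < 2 * M + 1)
    (hex : ∀ r > 0, ∃ fk : ℕ → Cn n → Cn n,
      (∀ k, AnalyticOnNhd ℂ (fk k) (ball (0 : Cn n) r) ∧ fk k 0 = 0) ∧
      TendstoUniformlyOn fk f atTop (ball (0 : Cn n) r) ∧
      ∀ k, AtLeastOrbits (fk k) M 1 (ball (0 : Cn n) r)) :
    hiddenOrbits f M = 1 := by
  refine IsGreatest.csSup_eq ⟨?_, ?_⟩
  · have isolated := H.isolatedFixedPtAt0 hfa (Function.iterate_fixed hf0 M)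
    obtain ⟨r, hr, hball⟩ := nhds_basis_closedBall.eventually_iff.1
      (eventually_nhdsWithin_iff.1 isolated.2)
    exact ⟨r, hr, fun x hx ↦ not_imp_not.1 (hball hx), hex r hr⟩
  · rintro m ⟨r, hr, hz, fk, hfk, hu, ho⟩
    have := H.mul_add_one_le hf hf0 hM hr hz hfk hu ho
    exact Nat.le_of_lt_succ (Nat.lt_of_mul_lt_mul_right (a := M) (by omega))

end Index

theorem iterate_id_add_sub_isLittleO {𝕜 E : Type*} [NontriviallyNormedField 𝕜]
    [NormedAddCommGroup E] [NormedSpace 𝕜 E] {v : E → E}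
    (hv : HasStrictFDerivAt v (0 : E →L[𝕜] E) 0) (hv0 : v 0 = 0) (m : ℕ) :
    (fun x ↦ (id + v)^[m] x - x - (m : 𝕜) • v x) =o[𝓝 0] v := by
  induction m with
  | zero => simp
  | succ m ih =>
    have iterate_sub_isBigO : (fun x ↦ (id + v)^[m] x - x) =O[𝓝 0] v :=
      (ih.isBigO.add ((isBigO_refl v _).const_smul_left (m : 𝕜))).congr_left
        fun x ↦ sub_add_cancel _ _
    have iterate_tendsto : Tendsto (id + v)^[m] (𝓝 0) (𝓝 0) := by
      have fixed : (id + v : E → E) 0 = 0 := by simp [hv0]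
      have cont : ContinuousAt (id + v : E → E) 0 := continuousAt_id.add hv.continuousAt
      simpa only [ContinuousAt, Function.iterate_fixed fixed] using cont.iterate fixed m
    have v_iterate : (fun x ↦ v ((id + v)^[m] x) - v x) =o[𝓝 0] v := by
      have := hv.isLittleO.comp_tendsto
        (nhds_prod_eq (x := (0 : E)) (y := (0 : E)) ▸ iterate_tendsto.prodMk tendsto_id)
      exact IsLittleO.trans_isBigO (by simpa [Function.comp_def] using this) iterate_sub_isBigO
    refine (ih.add v_iterate).congr_left fun x ↦ ?_
    rw [Function.iterate_succ_apply', Pi.add_apply, id, Nat.cast_succ, add_smul, one_smul]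
    abel

section Resonant
variable {M : ℕ} {d : Fin n → ℕ} {L : Cn n ≃L[ℂ] Cn n} {l : Cn n}

/-- The map `x ↦ l * (c x + L (x₁ ^ d₁, …, xₙ ^ dₙ))`, with the coordinatewise product of `ℂⁿ`.
For `c = 1` its linear part is diagonal with entries `l i`; varying `c` near `1` unfolds the
fixed point `0`. -/
def resonantMap (d : Fin n → ℕ) (L : Cn n ≃L[ℂ] Cn n) (l : Cn n) (c : ℂ) (x : Cn n) : Cn n :=
  l * (c • x + L (powMap d x))

theorem analyticAt_powMap (x : Cn n) : AnalyticAt ℂ (powMap d) x :=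
  .pi fun i ↦ ((ContinuousLinearMap.proj (R := ℂ) i).analyticAt x).pow (d i)

theorem analyticAt_resonantMap (c : ℂ) (x : Cn n) : AnalyticAt ℂ (resonantMap d L l c) x :=
  analyticAt_const.fun_mul (analyticAt_id.fun_const_smul.fun_add
    (((L : Cn n →L[ℂ] Cn n).analyticAt _).fun_comp (analyticAt_powMap x)))

theorem powMap_zero (hd : ∀ i, 1 < d i) : powMap d 0 = 0 :=
  funext fun i ↦ zero_pow (one_pos.trans (hd i)).ne'

theorem resonantMap_zero (hd : ∀ i, 1 < d i) (c : ℂ) : resonantMap d L l c 0 = 0 := by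
  simp [resonantMap, powMap_zero hd]

theorem hasStrictFDerivAt_powMap_zero (hd : ∀ i, 1 < d i) :
    HasStrictFDerivAt (powMap d) (0 : Cn n →L[ℂ] Cn n) 0 := by
  refine hasStrictFDerivAt_pi'.2 fun i ↦ ?_
  let coord : Cn n →L[ℂ] ℂ := ContinuousLinearMap.proj i
  refine (coord.hasStrictFDerivAt.pow (d i)).congr_fderiv ?_
  rw [map_zero, zero_pow (Nat.sub_pos_of_lt (hd i)).ne', smul_zero]
  exact zero_smul ℂ coord

theorem resonantMap_one_one : resonantMap d L 1 1 = id + L ∘ powMap d := by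
  ext; simp [resonantMap]

theorem resonantMap_iterate (comm : ∀ x, L (powMap d (l * x)) = l * L (powMap d x)) (c : ℂ)
    (j : ℕ) (x : Cn n) :
    (resonantMap d L l c)^[j] x = l ^ j * (resonantMap d L 1 c)^[j] x := by
  have commute : Function.Commute (l * ·) (resonantMap d L 1 c) := fun x ↦ by
    simp [resonantMap, comm, mul_add]
  have factor : resonantMap d L l c = (l * ·) ∘ resonantMap d L 1 c := by
    ext; simp [resonantMap]
  rw [factor, commute.comp_iterate, mul_left_iterate, Function.comp_apply]

section Index
variable (hd : ∀ i, 1 < d i) (comm : ∀ x, L (powMap d (l * x)) = l * L (powMap d x))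
  (hl : ∀ i, IsPrimitiveRoot (l i) M)
include hd

theorem hasStrictFDerivAt_comp_powMap_zero :
    HasStrictFDerivAt (L ∘ powMap d) (0 : Cn n →L[ℂ] Cn n) 0 := by
  simpa using (L : Cn n →L[ℂ] Cn n).hasStrictFDerivAt.comp 0 (hasStrictFDerivAt_powMap_zero hd)

theorem hasFDerivAt_resonantMap_one_iterate (j : ℕ) :
    HasFDerivAt (resonantMap d L 1 1)^[j] (1 : Cn n →L[ℂ] Cn n) 0 := by
  have deriv_one : HasFDerivAt (resonantMap d L 1 1) (1 : Cn n →L[ℂ] Cn n) 0 := by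
    rw [resonantMap_one_one]
    exact ((hasFDerivAt_id 0).add
      (hasStrictFDerivAt_comp_powMap_zero hd).hasFDerivAt).congr_fderiv (add_zero _)
  simpa using deriv_one.iterate (resonantMap_zero hd 1) j

include comm hl

theorem hasStableZeroCount_sub_iterate_of_lt {j : ℕ} (hj : 0 < j) (hjM : j < M) :
    HasStableZeroCount (fun x ↦ x - (resonantMap d L l 1)^[j] x) 1 := by
  have unit : IsUnit (1 - l ^ j) := Pi.isUnit_iff.2 fun i ↦
    (sub_ne_zero.2 ((hl i).pow_ne_one_of_pos_of_lt hj.ne' hjM).symm).isUnit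
  obtain ⟨u, hu⟩ := unit
  refine hasStableZeroCount_one (L := .smulLeft u) ?_ ?_
  · have iterate_eq : (fun x ↦ x - (resonantMap d L l 1)^[j] x) =
        id - fun x ↦ l ^ j * (resonantMap d L 1 1)^[j] x :=
      funext fun x ↦ congrArg (x - ·) (resonantMap_iterate comm 1 j x)
    rw [iterate_eq]
    refine ((hasFDerivAt_id 0).sub
      ((hasFDerivAt_resonantMap_one_iterate hd j).const_mul (l ^ j))).congr_fderiv ?_
    ext x
    simp [Units.smul_def, hu, sub_mul]
  · simp [Function.iterate_fixed (resonantMap_zero hd 1)]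

theorem hasStableZeroCount_sub_iterate (hM : 0 < M) :
    HasStableZeroCount (fun x ↦ x - (resonantMap d L l 1)^[M] x) (∏ i, d i) := by
  have pow_eq_one : l ^ M = 1 := funext fun i ↦ (hl i).pow_eq_one
  let L' : Cn n ≃L[ℂ] Cn n := L.trans
    (.smulLeft (Units.mk0 (-M : ℂ) (neg_ne_zero.2 (Nat.cast_ne_zero.2 hM.ne'))))
  refine hasStableZeroCount_of_isLittleO (fun i ↦ (one_pos.trans (hd i)).ne') L' ?_
  have expansion := iterate_id_add_sub_isLittleO (hasStrictFDerivAt_comp_powMap_zero hd (L := L))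
    (by simp [powMap_zero hd]) M
  refine (expansion.neg_left.trans_isBigO
    ((L : Cn n →L[ℂ] Cn n).isBigO_comp (powMap d) _)).congr_left fun x ↦ ?_
  rw [resonantMap_iterate comm, pow_eq_one, one_mul, resonantMap_one_one]
  simp only [L', Function.comp_apply, neg_sub, ContinuousLinearEquiv.trans_apply,
    ContinuousLinearEquiv.smulLeft_apply_apply, Units.smul_def, Units.val_mk0, neg_smul,
    sub_neg_eq_add]
  abel

end Index

theorem atLeastOrbits_one {f : Cn n → Cn n} {B : Set (Cn n)} {x : Cn n}
    (hx : ExactPeriodicPt f M x) (hB : ∀ j < M, f^[j] x ∈ B) : AtLeastOrbits f M 1 B :=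
  ⟨fun _ ↦ x, fun _ ↦ ⟨hx, hB⟩, fun i j hij ↦ (hij (Subsingleton.elim i j)).elim⟩

section Orbit
variable (comm : ∀ x, L (powMap d (l * x)) = l * L (powMap d x))
include comm

theorem resonantMap_iterate_of_add_eq_zero {ε : ℂ} {x : Cn n}
    (hx : ε • x + L (powMap d x) = 0) (j : ℕ) :
    (resonantMap d L l (1 + ε))^[j] x = l ^ j * x := by
  have fixed : resonantMap d L 1 (1 + ε) x = x := by
    rw [resonantMap, one_mul, add_smul, one_smul, add_assoc, hx, add_zero]
  rw [resonantMap_iterate comm, Function.iterate_fixed fixed]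

variable (hl : ∀ i, IsPrimitiveRoot (l i) M)
include hl

theorem exactPeriodicPt_resonantMap {ε : ℂ} {x : Cn n} (hx0 : x ≠ 0)
    (hx : ε • x + L (powMap d x) = 0) : ExactPeriodicPt (resonantMap d L l (1 + ε)) M x := by
  have orbit := resonantMap_iterate_of_add_eq_zero comm hx
  have pow_eq_one : l ^ M = 1 := funext fun i ↦ (hl i).pow_eq_one
  obtain ⟨i, hi⟩ := Function.ne_iff.1 hx0
  refine ⟨?_, fun j hj hjM hfix ↦ ?_⟩
  · rw [orbit, pow_eq_one, one_mul]
  · exact (hl i).pow_ne_one_of_pos_of_lt hj.ne' hjM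
      ((mul_eq_right₀ hi).1 (congrFun ((orbit j).symm.trans hfix) i))

theorem atLeastOrbits_resonantMap (hM : M ≠ 0) {ε : ℂ} {x : Cn n} (hx0 : x ≠ 0)
    (hx : ε • x + L (powMap d x) = 0) {r : ℝ} (hxr : ‖x‖ < r) :
    AtLeastOrbits (resonantMap d L l (1 + ε)) M 1 (ball 0 r) := by
  refine atLeastOrbits_one (exactPeriodicPt_resonantMap comm hl hx0 hx) fun j _ ↦ ?_
  rw [resonantMap_iterate_of_add_eq_zero comm hx, mem_ball_zero_iff,
    pi_norm_lt_iff ((norm_nonneg x).trans_lt hxr)]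
  intro i
  rw [Pi.mul_apply, Pi.pow_apply, norm_mul, norm_pow, (hl i).norm'_eq_one hM, one_pow, one_mul]
  exact (norm_le_pi_norm x i).trans_lt hxr

theorem exists_tendstoUniformlyOn_atLeastOrbits (hM : M ≠ 0) (hd : ∀ i, 1 < d i)
    (small : ∀ δ > 0, ∃ ε : ℂ, ∃ x : Cn n,
      ‖ε‖ < δ ∧ x ≠ 0 ∧ ‖x‖ < δ ∧ ε • x + L (powMap d x) = 0)
    {r : ℝ} (hr : 0 < r) :
    ∃ fk : ℕ → Cn n → Cn n,
      (∀ k, AnalyticOnNhd ℂ (fk k) (ball (0 : Cn n) r) ∧ fk k 0 = 0) ∧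
      TendstoUniformlyOn fk (resonantMap d L l 1) atTop (ball (0 : Cn n) r) ∧
      ∀ k, AtLeastOrbits (fk k) M 1 (ball (0 : Cn n) r) := by
  choose ε x hε hx0 hxr hx using fun k : ℕ ↦
    small (min r (1 / (k + 1))) (lt_min hr Nat.one_div_pos_of_nat)
  refine ⟨fun k ↦ resonantMap d L l (1 + ε k),
    fun k ↦ ⟨fun x _ ↦ analyticAt_resonantMap _ x, resonantMap_zero hd _⟩, ?_,
    fun k ↦ atLeastOrbits_resonantMap comm hl hM (hx0 k) (hx k)
      ((hxr k).trans_le (min_le_left _ _))⟩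
  have bound_tendsto : Tendsto (fun k : ℕ ↦ 1 / ((k : ℝ) + 1) * r) atTop (𝓝 0) := by
    simpa using tendsto_one_div_add_atTop_nhds_zero_nat.mul_const r
  refine tendstoUniformlyOn_iff.2 fun η hη ↦ ?_
  filter_upwards [bound_tendsto.eventually_lt_const hη] with k hk y hy
  have sub_eq : resonantMap d L l (1 + ε k) y - resonantMap d L l 1 y = l * (ε k • y) := by
    simp only [resonantMap, add_smul]
    ring
  rw [dist_comm, dist_eq_norm, sub_eq]
  refine lt_of_le_of_lt ((pi_norm_le_iff_of_nonneg (by positivity)).2 fun i ↦ ?_) hk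
  rw [Pi.mul_apply, norm_mul, (hl i).norm'_eq_one hM, one_mul]
  calc ‖(ε k • y) i‖ ≤ ‖ε k • y‖ := norm_le_pi_norm _ i
    _ = ‖ε k‖ * ‖y‖ := norm_smul _ _
    _ ≤ 1 / (k + 1) * r := by
        gcongr
        exacts [(hε k).le.trans (min_le_right _ _), (mem_ball_zero_iff.1 hy).le]

end Orbit

theorem analyticAt_resonantMap_iterate (c : ℂ) (j : ℕ) (x : Cn n) :
    AnalyticAt ℂ (resonantMap d L l c)^[j] x :=
  analyticAt_iterate (U := univ) (fun x _ ↦ analyticAt_resonantMap c x) j fun _ _ ↦ mem_univ _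

section Invariants
variable (hd : ∀ i, 1 < d i) (comm : ∀ x, L (powMap d (l * x)) = l * L (powMap d x))
  (hl : ∀ i, IsPrimitiveRoot (l i) M)
include hd comm hl

theorem isolatedFixedPtAt0_resonantMap (hM : 1 < M) :
    IsolatedFixedPtAt0 (resonantMap d L l 1) :=
  (hasStableZeroCount_sub_iterate_of_lt hd comm hl one_pos hM).isolatedFixedPtAt0
    (analyticAt_resonantMap 1 0) (resonantMap_zero hd 1)

theorem isolatedFixedPtAt0_resonantMap_iterate (hM : 0 < M) :
    IsolatedFixedPtAt0 (resonantMap d L l 1)^[M] :=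
  (hasStableZeroCount_sub_iterate hd comm hl hM).isolatedFixedPtAt0
    (analyticAt_resonantMap_iterate 1 M 0) (Function.iterate_fixed (resonantMap_zero hd 1) M)

theorem fixedPointIndex_resonantMap_iterate_of_lt {j : ℕ} (hj : 0 < j) (hjM : j < M) :
    fixedPointIndex (resonantMap d L l 1)^[j] 0 = 1 :=
  (hasStableZeroCount_sub_iterate_of_lt hd comm hl hj hjM).fixedPointIndex_eq
    (analyticAt_resonantMap_iterate 1 j 0) (Function.iterate_fixed (resonantMap_zero hd 1) j)

theorem fixedPointIndex_resonantMap_iterate (hM : 0 < M) :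
    fixedPointIndex (resonantMap d L l 1)^[M] 0 = ∏ i, d i :=
  (hasStableZeroCount_sub_iterate hd comm hl hM).fixedPointIndex_eq
    (analyticAt_resonantMap_iterate 1 M 0) (Function.iterate_fixed (resonantMap_zero hd 1) M)

theorem doldIndex_resonantMap (hM : 1 < M) :
    doldIndex (resonantMap d L l 1) M = ∏ i, (d i : ℤ) - 1 := by
  rw [doldIndex_eq_sub hM fun j ↦ fixedPointIndex_resonantMap_iterate_of_lt hd comm hl,
    fixedPointIndex_resonantMap_iterate hd comm hl (one_pos.trans hM)]
  push_cast
  rfl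

theorem hiddenOrbits_resonantMap (hM : 1 < M) (hprod : ∏ i, d i < 2 * M + 1)
    (small : ∀ δ > 0, ∃ ε : ℂ, ∃ x : Cn n,
      ‖ε‖ < δ ∧ x ≠ 0 ∧ ‖x‖ < δ ∧ ε • x + L (powMap d x) = 0) :
    hiddenOrbits (resonantMap d L l 1) M = 1 :=
  hiddenOrbits_eq_one
    (continuous_iff_continuousAt.2 fun x ↦ (analyticAt_resonantMap 1 x).continuousAt)
    (resonantMap_zero hd 1) (analyticAt_resonantMap_iterate 1 M 0) hM
    (hasStableZeroCount_sub_iterate hd comm hl (one_pos.trans hM)) hprod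
    fun _ ↦ exists_tendstoUniformlyOn_atLeastOrbits comm hl (one_pos.trans hM).ne' hd small

end Invariants

end Resonant

section Swap
variable {M α β : ℕ} {l₁ l₂ : ℂ}

theorem exists_weightedSwap {c₁ c₂ : ℂ} (h₁ : c₁ ≠ 0) (h₂ : c₂ ≠ 0) :
    ∃ L : Cn 2 ≃L[ℂ] Cn 2, ∀ y, L y = ![c₁ * y 1, c₂ * y 0] := by
  refine ⟨(ContinuousLinearEquiv.piCongrLeft ℂ (fun _ ↦ ℂ) (Equiv.swap 0 1)).trans
    (.piCongrRight ![.smulLeft (Units.mk0 c₁ h₁), .smulLeft (Units.mk0 c₂ h₂)]),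
    fun y ↦ funext fun i ↦ ?_⟩
  fin_cases i
  · rfl
  · rfl

/- The curve `u ↦ (u ^ (β + 1), b u ^ (α + 1))` has `c₁ x₁ ^ β / x₀ = c₂ x₀ ^ α / x₁` when
`b ^ (β + 1) = c₂ / c₁`, and both quotients are constant multiples of `u ^ M`. -/
theorem exists_small_weightedSwap_solution {c₁ c₂ : ℂ} (h₁ : c₁ ≠ 0) (hM : M ≠ 0)
    (hαβ : α * β = M + 1) {δ : ℝ} (hδ : 0 < δ) :
    ∃ ε : ℂ, ∃ x : Cn 2, ‖ε‖ < δ ∧ x ≠ 0 ∧ ‖x‖ < δ ∧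
      ε • x + ![c₁ * x 1 ^ β, c₂ * x 0 ^ α] = 0 := by
  obtain ⟨b, hb⟩ := IsAlgClosed.exists_pow_nat_eq (c₂ / c₁) β.succ_pos
  have c₂_eq : c₁ * b ^ (β + 1) = c₂ := by rw [hb, mul_div_cancel₀ _ h₁]
  have ε_cont : Continuous fun u : ℂ ↦ -(c₁ * b ^ β) * u ^ M := by fun_prop
  have x_cont : Continuous fun u : ℂ ↦ (![u ^ (β + 1), b * u ^ (α + 1)] : Cn 2) :=
    continuous_pi (Fin.forall_fin_two.2
      ⟨continuous_pow _, continuous_const.mul (continuous_pow _)⟩)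
  have ε_small : ∀ᶠ u : ℂ in 𝓝 0, ‖-(c₁ * b ^ β) * u ^ M‖ < δ :=
    ε_cont.norm.tendsto' 0 0 (by simp [hM]) |>.eventually_lt_const hδ
  have x_small : ∀ᶠ u : ℂ in 𝓝 0, ‖(![u ^ (β + 1), b * u ^ (α + 1)] : Cn 2)‖ < δ :=
    x_cont.norm.tendsto' 0 0 (by simp) |>.eventually_lt_const hδ
  obtain ⟨u, ⟨hε, hx⟩, hu⟩ := (((ε_small.and x_small).filter_mono nhdsWithin_le_nhds).and
    (self_mem_nhdsWithin (a := (0 : ℂ)) (s := {0}ᶜ))).exists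
  refine ⟨_, _, hε, fun h ↦ pow_ne_zero (β + 1) hu (congrFun h 0), hx, funext fun i ↦ ?_⟩
  fin_cases i
  · calc -(c₁ * b ^ β) * u ^ M * u ^ (β + 1) + c₁ * (b * u ^ (α + 1)) ^ β
        = c₁ * b ^ β * u ^ β * (u ^ (α * β) - u ^ (M + 1)) := by ring
      _ = 0 := by rw [hαβ, sub_self, mul_zero]
  · calc -(c₁ * b ^ β) * u ^ M * (b * u ^ (α + 1)) + c₂ * (u ^ (β + 1)) ^ α
        = c₁ * b ^ (β + 1) * u ^ α * (u ^ (α * β) - u ^ (M + 1)) := by rw [← c₂_eq]; ring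
      _ = 0 := by rw [hαβ, sub_self, mul_zero]

theorem weightedSwap_powMap_mul (h₁ : l₁ ≠ 0) (h₂ : l₂ ≠ 0) (hl₁ : l₁ ^ α = l₂)
    (hl₂ : l₂ ^ β = l₁) {L : Cn 2 ≃L[ℂ] Cn 2} (hL : ∀ y, L y = ![l₁⁻¹ * y 1, l₂⁻¹ * y 0])
    (x : Cn 2) :
    L (powMap ![α, β] (![l₁, l₂] * x)) = ![l₁, l₂] * L (powMap ![α, β] x) := by
  rw [hL, hL]
  ext i
  fin_cases i
  · simp [powMap, mul_pow, hl₂, h₁]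
  · simp [powMap, mul_pow, hl₁, h₂]

theorem resonantMap_weightedSwap (h₁ : l₁ ≠ 0) (h₂ : l₂ ≠ 0)
    {L : Cn 2 ≃L[ℂ] Cn 2} (hL : ∀ y, L y = ![l₁⁻¹ * y 1, l₂⁻¹ * y 0]) :
    resonantMap ![α, β] L ![l₁, l₂] 1 =
      fun x ↦ ![l₁ * x 0 + x 1 ^ β, l₂ * x 1 + x 0 ^ α] := by
  ext x i
  fin_cases i
  · simp [resonantMap, powMap, hL, mul_add, h₁, Matrix.vecHead]
  · simp [resonantMap, powMap, hL, mul_add, h₂, Matrix.vecHead, Matrix.vecTail]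

end Swap

/-- For `F(x₁,x₂) = (λ₁x₁ + x₂^β, λ₂x₂ + x₁^α)` with `λ₁, λ₂` primitive `M`-th roots
of unity, `1 < α, β < M`, `λ₁^α = λ₂`, `λ₂^β = λ₁` and `αβ = M + 1`: `0` is an
isolated fixed point of `F` and `F^M`, with `μ_F(0) = 1`, `μ_{F^M}(0) = αβ = M + 1`,
`P_M(F,0) = M` and `𝒪_M(F,0) = 1`. -/
theorem counterexample_b2 (M : ℕ) (hM : 1 < M) (l₁ l₂ : ℂ)
    (h₁ : IsPrimitiveRoot l₁ M) (h₂ : IsPrimitiveRoot l₂ M)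
    (α β : ℕ) (hα₁ : 1 < α) (hαM : α < M) (hβ₁ : 1 < β) (hβM : β < M)
    (hl₁ : l₁ ^ α = l₂) (hl₂ : l₂ ^ β = l₁) (hαβ : α * β = M + 1)
    (F : Cn 2 → Cn 2)
    (hform : F = fun x => ![l₁ * x 0 + x 1 ^ β, l₂ * x 1 + x 0 ^ α]) :
    IsolatedFixedPtAt0 F ∧ IsolatedFixedPtAt0 (F^[M]) ∧
    fixedPointIndex F 0 = 1 ∧
    fixedPointIndex (F^[M]) 0 = α * β ∧
    fixedPointIndex (F^[M]) 0 = M + 1 ∧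
    doldIndex F M = (M : ℤ) ∧
    hiddenOrbits F M = 1 := by
  have l₁_ne : l₁ ≠ 0 := h₁.ne_zero (one_pos.trans hM).ne'
  have l₂_ne : l₂ ≠ 0 := h₂.ne_zero (one_pos.trans hM).ne'
  obtain ⟨L, hL⟩ := exists_weightedSwap (inv_ne_zero l₁_ne) (inv_ne_zero l₂_ne)
  obtain rfl : F = resonantMap ![α, β] L ![l₁, l₂] 1 :=
    hform.trans (resonantMap_weightedSwap l₁_ne l₂_ne hL).symm
  have hd : ∀ i, 1 < ![α, β] i := Fin.forall_fin_two.2 ⟨hα₁, hβ₁⟩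
  have hl : ∀ i, IsPrimitiveRoot (![l₁, l₂] i) M := Fin.forall_fin_two.2 ⟨h₁, h₂⟩
  have comm := weightedSwap_powMap_mul l₁_ne l₂_ne hl₁ hl₂ hL
  have prod_eq : ∏ i, ![α, β] i = α * β := Fin.prod_univ_two _
  have index_eq := fixedPointIndex_resonantMap_iterate hd comm hl (one_pos.trans hM)
  refine ⟨isolatedFixedPtAt0_resonantMap hd comm hl hM,
    isolatedFixedPtAt0_resonantMap_iterate hd comm hl (one_pos.trans hM),
    fixedPointIndex_resonantMap_iterate_of_lt hd comm hl one_pos hM,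
    index_eq.trans prod_eq, index_eq.trans (prod_eq.trans hαβ), ?_, ?_⟩
  · rw [doldIndex_resonantMap hd comm hl hM, ← Nat.cast_prod, prod_eq, hαβ]
    push_cast
    ring
  · refine hiddenOrbits_resonantMap hd comm hl hM (by rw [prod_eq]; omega) fun δ hδ ↦ ?_
    simp only [hL]
    exact exists_small_weightedSwap_solution (inv_ne_zero l₁_ne) (one_pos.trans hM).ne' hαβ hδ

end ZhangPaper
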